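/- arXiv:2406.10793 — 4 statements merged into one kernel-verified Lean document; each statement's English description precedes it below -/
import Mathlib

section
/- Under the SFBS iteration, for every solution z* (i.e. −F(z*) ∈ G(z*)) the following hold: (i) for all integers k ≥ 1, (1/(2L) + ρ − D/(2(r−1))) · k² · ‖F(z_k) + G̃_k‖² ≤ ((r³ − r²)/(2D)) · ‖z_0 − z*‖²; (ii) ∑_{k=0}^∞ (1/2)·[(r−1)(1/L + 2ρ) − D]·(2k + r + 1)·‖F(z_{k+1}) + G̃_{k+1}‖² ≤ ((r³ − r²)/(2D)) · ‖z_0 − z*‖². In particular, if D < (r−1)(1/L + 2ρ), then for all k ≥ 1, ‖F(z_k) + G̃_k‖² ≤ (r−1)²r² / (((r−1)(1/L + 2ρ)D − D²)·k²) · ‖z_0 − z*‖². -/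
open RealInnerProductSpace Filter

lemma sfbs_scalar (k l ρ r D a b ab s0 s1 tz tu tzp pz pu pzp ps U U' : ℝ)
    (hk : 0 ≤ k) (hl : 0 < l) (hr : 1 < r) (hD : 0 < D)
    (e1 : (k+r) * pzp = k * pz + r * pu - (k+r) * l * s1 - 2*ρ*k*ab)
    (e0 : (k+r) * tzp = k * tz + r * tu - (k+r) * l * s0 - 2*ρ*k*a)
    (hlip : (k+r)^2 * (b - 2*s1) ≤ k^2 * a - 2*k*(k+r)*s0)
    (hc : ρ * (b - 2*ab + a) ≤ pzp - pz - tzp + tz)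
    (hs : ρ * b ≤ pzp - ps)
    (hU : U' = U - 2*(D/r)*(pu-ps) + (D/r)^2*b) :
    (l+2*ρ)/2*(k+1)^2*b + r*(k+1)*(pzp - (pu - D/r*b) - ρ*b) + (r^3-r^2)/(2*D)*U'
      + (1/2)*((r-1)*(l+2*ρ) - D)*(2*k+r+1)*b
    ≤ (l+2*ρ)/2*k^2*a + r*k*(tz - tu - ρ*a) + (r^3-r^2)/(2*D)*U := by
  have h1 : (r^3-r^2)/(2*D)*U' = (r^3-r^2)/(2*D)*U - (r^2-r)*(pu-ps) + (r-1)*D/2*b := by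
    rw [hU]; field_simp
  have h2 : r*(k+1)*(pzp - (pu - D/r*b) - ρ*b) = r*(k+1)*(pzp - pu - ρ*b) + (k+1)*D*b := by
    field_simp; ring
  have m1 := mul_le_mul_of_nonneg_left hc (by positivity : 0 ≤ k*(k+r))
  have m2 := mul_le_mul_of_nonneg_left hlip (by positivity : 0 ≤ l/2)
  have m3 := mul_le_mul_of_nonneg_left hs (by nlinarith : 0 ≤ r^2-r)
  rw [h1, h2]
  linear_combination m1 + m2 + m3 + (k+r)*e1 - k*e0

/-- Convergence rates of the Symplectic Forward-Backward Splitting (SFBS) method. -/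
theorem sfbs_convergence_rate
    {H : Type*} [NormedAddCommGroup H] [InnerProductSpace ℝ H] [CompleteSpace H]
    (L ρ r D : ℝ) (F : H → H) (G : H → Set H)
    (z zh zt u Gt : ℕ → H)
    (hL : 0 < L) (hρ : -1/(2*L) < ρ)
    (hLip : ∀ x y : H, ‖F x - F y‖ ≤ L * ‖x - y‖)
    (hcomono : ∀ x y g h : H, g ∈ G x → h ∈ G y →
      ρ * ‖(F x + g) - (F y + h)‖^2 ≤ ⟪(F x + g) - (F y + h), x - y⟫)
    (hr : 1 < r) (hD0 : 0 < D) (hD : D ≤ (r - 1) * (1/L + 2*ρ))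
    (hu0 : u 0 = z 0) (hG0 : Gt 0 ∈ G (z 0))
    (hzt : ∀ k : ℕ, zt (k+1) = ((k : ℝ)/((k : ℝ) + r)) • z k + (r/((k : ℝ) + r)) • u k)
    (hzh : ∀ k : ℕ, zh k =
      zt (k+1) - ((k : ℝ)/((k : ℝ) + r) * (1/L + 2*ρ)) • (F (z k) + Gt k))
    (hz : ∀ k : ℕ, z (k+1) = zt (k+1) - (1/L) • (F (zh k) + Gt (k+1))
        - ((2*ρ*(k : ℝ))/((k : ℝ) + r)) • (F (z k) + Gt k))
    (hGt : ∀ k : ℕ, Gt (k+1) ∈ G (z (k+1)))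
    (hu : ∀ k : ℕ, u (k+1) = u k - (D/r) • (F (z (k+1)) + Gt (k+1)))
    (zs : H) (hzs : -F zs ∈ G zs) :
    (∀ k : ℕ, 1 ≤ k →
      (1/(2*L) + ρ - D/(2*(r-1))) * (k : ℝ)^2 * ‖F (z k) + Gt k‖^2
        ≤ (r^3 - r^2)/(2*D) * ‖z 0 - zs‖^2) ∧
    (∀ n : ℕ, ∑ k ∈ Finset.range n,
        (1/2) * ((r - 1) * (1/L + 2*ρ) - D) * (2*(k : ℝ) + r + 1)
          * ‖F (z (k+1)) + Gt (k+1)‖^2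
        ≤ (r^3 - r^2)/(2*D) * ‖z 0 - zs‖^2) ∧
    (D < (r - 1) * (1/L + 2*ρ) → ∀ k : ℕ, 1 ≤ k →
      ‖F (z k) + Gt k‖^2
        ≤ (r-1)^2 * r^2 / (((r - 1) * (1/L + 2*ρ) * D - D^2) * (k : ℝ)^2)
          * ‖z 0 - zs‖^2) := by
  have hrp : 0 < r := by linarith
  have hr1 : 0 < r - 1 := by linarith
  set T : ℕ → H := fun k => F (z k) + Gt k with hT
  have hG : ∀ k, Gt k ∈ G (z k) := by
    intro k
    cases k with
    | zero => exact hG0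
    | succ n => exact hGt n
  have hsol : ∀ k, ρ * ‖T k‖^2 ≤ ⟪T k, z k⟫ - ⟪T k, zs⟫ := by
    intro k
    have := hcomono (z k) zs (Gt k) (-F zs) (hG k) hzs
    simpa [hT, inner_sub_right] using this
  set E : ℕ → ℝ := fun k => (1/L+2*ρ)/2*(k:ℝ)^2*‖T k‖^2
    + r*k*(⟪T k, z k⟫ - ⟪T k, u k⟫ - ρ*‖T k‖^2) + (r^3-r^2)/(2*D)*‖u k - zs‖^2 with hE
  have hstep : ∀ k : ℕ, E (k+1) + (1/2) * ((r - 1) * (1/L + 2*ρ) - D) * (2*(k : ℝ) + r + 1)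
          * ‖T (k+1)‖^2 ≤ E k := by
    intro k
    have hkr : (0:ℝ) < (k:ℝ) + r := by positivity
    set S := F (zh k) + Gt (k+1) with hS
    have hvec : ((k:ℝ)+r) • z (k+1) = (k:ℝ) • z k + r • u k - (((k:ℝ)+r)*(1/L)) • S
        - (2*ρ*k) • T k := by
      have h0 : z (k+1) = zt (k+1) - (1/L) • S - ((2*ρ*(k : ℝ))/((k : ℝ) + r)) • T k := hz k
      have c1 : ((k:ℝ)+r) * ((k : ℝ)/((k : ℝ) + r)) = k := by field_simp
      have c2 : ((k:ℝ)+r) * (r/((k : ℝ) + r)) = r := by field_simp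
      have c3 : ((k:ℝ)+r) * ((2*ρ*(k : ℝ))/((k : ℝ) + r)) = 2*ρ*k := by field_simp
      rw [h0, hzt k, smul_sub, smul_sub, smul_add, smul_smul, smul_smul, smul_smul, smul_smul,
        c1, c2, c3]
    have hin : ∀ x : H, ((k:ℝ)+r) * ⟪x, z (k+1)⟫ = (k:ℝ) * ⟪x, z k⟫ + r * ⟪x, u k⟫
        - ((k:ℝ)+r)*(1/L) * ⟪x, S⟫ - 2*ρ*k * ⟪x, T k⟫ := by
      intro x
      have := congrArg (fun v => ⟪x, v⟫) hvec
      simpa only [inner_sub_right, inner_add_right, inner_smul_right] using this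
    have e1 := hin (T (k+1))
    have e0 := hin (T k)
    rw [real_inner_self_eq_norm_sq] at e0
    have hdiff : z (k+1) - zh k = (1/L) • (((k:ℝ)/((k:ℝ)+r)) • T k - S) := by
      have h0 : z (k+1) = zt (k+1) - (1/L) • S - ((2*ρ*(k : ℝ))/((k : ℝ) + r)) • T k := hz k
      have h0' : zh k = zt (k+1) - ((k : ℝ)/((k : ℝ) + r) * (1/L + 2*ρ)) • T k := hzh k
      have h1 : ((k:ℝ)/((k:ℝ)+r) * (1/L + 2*ρ)) = (1/L) * ((k:ℝ)/((k:ℝ)+r)) + 2*ρ*k/((k:ℝ)+r) := by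
        field_simp
      rw [h0, h0', h1]
      module
    have hl1 : ‖T (k+1) - S‖ ≤ ‖((k:ℝ)/((k:ℝ)+r)) • T k - S‖ := by
      have h := hLip (z (k+1)) (zh k)
      rw [hdiff, norm_smul, Real.norm_of_nonneg (by positivity)] at h
      have h2 : T (k+1) - S = F (z (k+1)) - F (zh k) := by simp [hT, hS]
      rw [h2]
      refine h.trans (le_of_eq ?_)
      field_simp
    have hl2 : ‖((k:ℝ)+r) • (T (k+1) - S)‖ ≤ ‖(k:ℝ) • T k - ((k:ℝ)+r) • S‖ := by
      have h3 : (k:ℝ) • T k - ((k:ℝ)+r) • S = ((k:ℝ)+r) • (((k:ℝ)/((k:ℝ)+r)) • T k - S) := by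
        rw [smul_sub, smul_smul]; congr 2; field_simp
      rw [h3, norm_smul, norm_smul]
      gcongr
    have hl3 := pow_le_pow_left₀ (norm_nonneg _) hl2 2
    rw [norm_smul, mul_pow, Real.norm_eq_abs, sq_abs, norm_sub_sq_real, norm_sub_sq_real,
      norm_smul, norm_smul, mul_pow, mul_pow, Real.norm_eq_abs, sq_abs, Real.norm_eq_abs, sq_abs,
      real_inner_smul_left, real_inner_smul_right] at hl3
    have hc := hcomono (z (k+1)) (z k) (Gt (k+1)) (Gt k) (hG _) (hG _)
    change ρ * ‖T (k+1) - T k‖^2 ≤ ⟪T (k+1) - T k, _⟫ at hc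
    rw [norm_sub_sq_real, inner_sub_left, inner_sub_right, inner_sub_right] at hc
    have hU : ‖u (k+1) - zs‖^2 = ‖u k - zs‖^2 - 2*(D/r)*(⟪T (k+1), u k⟫ - ⟪T (k+1), zs⟫)
        + (D/r)^2*‖T (k+1)‖^2 := by
      have : u (k+1) - zs = (u k - zs) - (D/r) • T (k+1) := by
        rw [hu k]; simp only [hT]; abel
      rw [this, norm_sub_sq_real, norm_smul, mul_pow, Real.norm_eq_abs, sq_abs,
        real_inner_smul_right, real_inner_comm, inner_sub_right]
      ring
    have hpu : ⟪T (k+1), u (k+1)⟫ = ⟪T (k+1), u k⟫ - D/r*‖T (k+1)‖^2 := by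
      have : u (k+1) = u k - (D/r) • T (k+1) := hu k
      rw [this, inner_sub_right, inner_smul_right, real_inner_self_eq_norm_sq]
    have key := sfbs_scalar k (1/L) ρ r D (‖T k‖^2) (‖T (k+1)‖^2) ⟪T (k+1), T k⟫ ⟪T k, S⟫
      ⟪T (k+1), S⟫ ⟪T k, z k⟫ ⟪T k, u k⟫ ⟪T k, z (k+1)⟫ ⟪T (k+1), z k⟫ ⟪T (k+1), u k⟫
      ⟪T (k+1), z (k+1)⟫ ⟪T (k+1), zs⟫ (‖u k - zs‖^2) (‖u (k+1) - zs‖^2)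
      (by positivity) (by positivity) hr hD0 e1 e0 (by linarith) (by linarith) (hsol _) hU
    simp only [hE]
    rw [hpu]
    push_cast
    exact key
  have hlow : ∀ k : ℕ, (1/(2*L) + ρ - D/(2*(r-1))) * (k : ℝ)^2 * ‖T k‖^2 ≤ E k := by
    intro k
    have h1 := mul_le_mul_of_nonneg_left (hsol k) (by positivity : 0 ≤ r*(k:ℝ))
    have hc0 : 0 ≤ (r^2*(r-1))/(2*D) := by positivity
    have h2 := mul_nonneg hc0 (sq_nonneg ‖(u k - zs) - (k*D/(r*(r-1))) • T k‖)
    rw [norm_sub_sq_real, norm_smul, mul_pow, Real.norm_eq_abs, sq_abs,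
        real_inner_smul_right, real_inner_comm, inner_sub_right] at h2
    have h3 : (r^2*(r-1))/(2*D) * (‖u k - zs‖^2 - 2*(k*D/(r*(r-1)) * (⟪T k, u k⟫ - ⟪T k, zs⟫))
        + (k*D/(r*(r-1)))^2*‖T k‖^2) = (r^3-r^2)/(2*D)*‖u k - zs‖^2
        - r*k*(⟪T k, u k⟫ - ⟪T k, zs⟫) + D/(2*(r-1))*(k:ℝ)^2*‖T k‖^2 := by
      field_simp
    rw [h3] at h2
    have h4 : 1/(2*L) = (1/L)/2 := by field_simp
    simp only [hE]
    rw [h4]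
    linarith
  have hE0 : E 0 = (r^3 - r^2)/(2*D) * ‖z 0 - zs‖^2 := by
    simp [hE, hu0]
  have hcoef : 0 ≤ 1/(2*L) + ρ - D/(2*(r-1)) := by
    have : 1/(2*L) + ρ - D/(2*(r-1)) = ((r - 1) * (1/L + 2*ρ) - D)/(2*(r-1)) := by
      field_simp
    rw [this]
    exact div_nonneg (by linarith) (by linarith)
  have hsum : ∀ n : ℕ, E n + ∑ k ∈ Finset.range n,
        (1/2) * ((r - 1) * (1/L + 2*ρ) - D) * (2*(k : ℝ) + r + 1) * ‖T (k+1)‖^2 ≤ E 0 := by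
    intro n
    induction n with
    | zero => simp
    | succ n ih =>
      rw [Finset.sum_range_succ]
      linarith [hstep n]
  have hi : ∀ k : ℕ, (1/(2*L) + ρ - D/(2*(r-1))) * (k : ℝ)^2 * ‖T k‖^2
        ≤ (r^3 - r^2)/(2*D) * ‖z 0 - zs‖^2 := by
    intro k
    have hp : 0 ≤ ∑ k ∈ Finset.range k,
        (1/2) * ((r - 1) * (1/L + 2*ρ) - D) * (2*(k : ℝ) + r + 1) * ‖T (k+1)‖^2 := by
      refine Finset.sum_nonneg fun j _ => ?_
      have : 0 ≤ (r - 1) * (1/L + 2*ρ) - D := by linarith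
      positivity
    linarith [hsum k, hlow k]
  refine ⟨fun k _ => hi k, fun n => ?_, fun hD' k hk => ?_⟩
  · have h1 := hlow n
    have h2 : 0 ≤ (1/(2*L) + ρ - D/(2*(r-1))) * (n : ℝ)^2 * ‖T n‖^2 := by positivity
    have h3 := hsum n
    rw [hE0] at h3
    exact le_trans (by linarith) h3
  · have hkp : (0:ℝ) < k := by exact_mod_cast hk
    have hA : 0 < (r - 1) * (1/L + 2*ρ) * D - D^2 := by nlinarith
    have h1 := mul_le_mul_of_nonneg_left (hi k) (by positivity : 0 ≤ 2*(r-1)*D)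
    have h2 : 2*(r-1)*D*((1/(2*L) + ρ - D/(2*(r-1))) * (k : ℝ)^2 * ‖T k‖^2)
        = ((r - 1) * (1/L + 2*ρ) * D - D^2) * (k:ℝ)^2 * ‖T k‖^2 := by
      field_simp
    have h3 : 2*(r-1)*D*((r^3 - r^2)/(2*D) * ‖z 0 - zs‖^2) = (r-1)^2*r^2*‖z 0 - zs‖^2 := by
      field_simp
    rw [h2, h3] at h1
    rw [div_mul_eq_mul_div, le_div_iff₀ (by positivity)]
    change ‖T k‖^2 * _ ≤ _
    linarith
end

section
/- (Faster convergence rate) Under the step-size-s SFBS iteration with F L-Lipschitz, G such that T = F + G is ρ-comonotone with ρ > −1/(2L), max{0, −2ρ} < s < 1/L, r > 1 and 0 < D < (r−1)(s + 2ρ), the following hold: (i) lim_{k→∞} ‖z_k − u_k‖² = 0; (ii) for every solution z* (i.e. −F(z*) ∈ G(z*)), lim_{k→∞} ‖u_k − z*‖² exists; (iii) lim_{k→∞} k²·‖F(z_k) + G̃_k‖² = 0 (hence k²·dist(0, T(z_k))² → 0); (iv) lim_{k→∞} k²·‖z_{k+1} − z_k‖² = 0. -/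
open RealInnerProductSpace Filter

lemma aux_conv (x y e : ℕ → ℝ) (B : ℝ) (hB : ∀ n, B ≤ x n) (hy : ∀ n, 0 ≤ y n)
    (he0 : ∀ n, 0 ≤ e n) (he : Summable e) (h : ∀ n, x (n+1) + y n ≤ x n + e n) :
    (∃ l, Tendsto x atTop (nhds l)) ∧ Summable y := by
  have hS : ∀ n, ∑ i ∈ Finset.range n, e i ≤ ∑' i, e i := fun n =>
    he.sum_le_tsum _ (fun i _ => he0 i)
  constructor
  · have hanti : Antitone (fun n => x n - ∑ i ∈ Finset.range n, e i) := by
      refine antitone_nat_of_succ_le (fun n => ?_)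
      rw [Finset.sum_range_succ]
      linarith [h n, hy n]
    have hbdd : BddBelow (Set.range (fun n => x n - ∑ i ∈ Finset.range n, e i)) := by
      refine ⟨B - ∑' i, e i, ?_⟩
      rintro _ ⟨n, rfl⟩
      have h1 := hS n
      have h2 := hB n
      show B - ∑' i, e i ≤ x n - ∑ i ∈ Finset.range n, e i
      linarith
    have h1 := tendsto_atTop_ciInf hanti hbdd
    have h2 := he.hasSum.tendsto_sum_nat
    refine ⟨_, (h1.add h2).congr (fun n => ?_)⟩
    ring
  · refine summable_of_sum_range_le (c := x 0 - B + ∑' i, e i) hy (fun n => ?_)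
    have key : ∀ n, x n + ∑ i ∈ Finset.range n, y i ≤ x 0 + ∑ i ∈ Finset.range n, e i := by
      intro n
      induction n with
      | zero => simp
      | succ n ih =>
        rw [Finset.sum_range_succ, Finset.sum_range_succ]
        linarith [h n]
    linarith [key n, hS n, hB n]

lemma aux_zero (x : ℕ → ℝ) (l : ℝ) (hx : ∀ n, 0 ≤ x n) (hl : Tendsto x atTop (nhds l))
    (hs : Summable (fun n : ℕ => x n / ((n:ℝ)+1))) : l = 0 := by
  have hl0 : 0 ≤ l := ge_of_tendsto' hl hx
  by_contra hne
  have hpos : 0 < l := lt_of_le_of_ne hl0 (Ne.symm hne)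
  have hev : ∀ᶠ n in atTop, l/2 < x n := hl.eventually (lt_mem_nhds (by linarith))
  obtain ⟨N, hN⟩ := eventually_atTop.1 hev
  have h1 : Summable (fun n : ℕ => x (n+N) / (((n+N : ℕ):ℝ)+1)) :=
    (summable_nat_add_iff (f := fun n : ℕ => x n / ((n:ℝ)+1)) N).2 hs
  have h2 : Summable (fun n : ℕ => (l/2) * (1 / (((n+N : ℕ):ℝ)+1))) := by
    refine Summable.of_nonneg_of_le (fun n => by positivity) (fun n => ?_) h1
    have := hN (n+N) (by omega)
    rw [mul_one_div]
    gcongr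
  have h3 : Summable (fun n : ℕ => (1 / (((n+N : ℕ):ℝ)+1))) :=
    (summable_mul_left_iff (by linarith)).1 h2
  have h4 : Summable (fun n : ℕ => 1 / ((n:ℝ)+1)) :=
    (summable_nat_add_iff (f := fun n : ℕ => 1 / ((n:ℝ)+1)) N).1 h3
  have h5 : Summable (fun n : ℕ => 1 / (n:ℝ)) := by
    refine (summable_nat_add_iff (f := fun n : ℕ => 1 / (n:ℝ)) 1).1 ?_
    refine h4.congr (fun n => ?_)
    push_cast
    rfl
  exact Real.not_summable_one_div_natCast h5

/-- one step energy inequality -/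
lemma aux_step {H : Type*} [NormedAddCommGroup H] [InnerProductSpace ℝ H]
    (L ρ s r D k : ℝ) (a b c d w w' dz : H) (hs : 0 < s) (hr : 1 < r) (hk : 0 ≤ k)
    (hw : w' = (k/(k+r)) • w + (D/r) • b - s • c - (2*ρ*k/(k+r)) • a)
    (hdz : dz = -((r/(k+r)) • w) - s • c - (2*ρ*k/(k+r)) • a)
    (hd : d = c - (k/(k+r)) • a)
    (hmon : ρ * ‖b - a‖^2 ≤ ⟪b - a, dz⟫)
    (hlip : ‖c - b‖^2 ≤ L^2 * s^2 * ‖d‖^2) :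
    r*(k+1)*⟪b, w'⟫ + (s/2*(k+1)^2 + ρ*(k+1)*(k+1-r))*‖b‖^2
      + s/2*(1-s^2*L^2)*((k+r)^2*‖d‖^2) + r*(r-1)*⟪b,w'⟫
      + (((r-1)*(s+2*ρ)-D)*(k+(r+1)/2) - r*(r-1)*ρ - (r-1)*D/2)*‖b‖^2
    ≤ r*k*⟪a,w⟫ + (s/2*k^2+ρ*k*(k-r))*‖a‖^2 := by
  have hkr : 0 < k + r := by linarith
  have hr0 : 0 < r := by linarith
  have e1 : (k+r)*⟪b,w'⟫ = k*⟪b,w⟫ + (D/r)*(k+r)*‖b‖^2 - s*(k+r)*⟪b,c⟫ - 2*ρ*k*⟪b,a⟫ := by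
    rw [hw]
    simp only [inner_sub_right, inner_add_right, inner_smul_right, real_inner_self_eq_norm_sq]
    field_simp
  have e2 : ∀ v : H, (k+r)*⟪v,dz⟫ = -r*⟪v,w⟫ - s*(k+r)*⟪v,c⟫ - 2*ρ*k*⟪v,a⟫ := by
    intro v
    rw [hdz]
    simp only [inner_sub_right, inner_neg_right, inner_smul_right]
    field_simp
  have e3 : (k+r)^2*‖d‖^2 = (k+r)^2*‖c‖^2 - 2*k*(k+r)*⟪a,c⟫ + k^2*‖a‖^2 := by
    rw [hd, norm_sub_sq_real, inner_smul_right, norm_smul, mul_pow, Real.norm_eq_abs, sq_abs,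
      real_inner_comm]
    field_simp
  have e4 : ‖c - b‖^2 = ‖c‖^2 - 2*⟪b,c⟫ + ‖b‖^2 := by
    rw [norm_sub_sq_real, real_inner_comm]
  have e5 : ‖b - a‖^2 = ‖b‖^2 - 2*⟪b,a⟫ + ‖a‖^2 := norm_sub_sq_real _ _
  have eb := e2 b
  have ea := e2 a
  rw [real_inner_self_eq_norm_sq] at ea
  rw [inner_sub_left, e5] at hmon
  rw [e4] at hlip
  have hmon2 := mul_le_mul_of_nonneg_left hmon (mul_nonneg hk hkr.le)
  have hlip2 := mul_le_mul_of_nonneg_left hlip (mul_nonneg (by positivity : (0:ℝ) ≤ s/2) (sq_nonneg (k+r)))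
  have hDr : r * (D/r) = D := by field_simp
  generalize D/r = q at *
  subst hDr
  generalize ‖d‖^2 = nd at *
  generalize ‖a‖^2 = na at *
  generalize ‖b‖^2 = nb at *
  generalize ‖c‖^2 = nc at *
  generalize (⟪b,w'⟫ : ℝ) = bw' at *
  generalize (⟪b,w⟫ : ℝ) = bw at *
  generalize (⟪a,w⟫ : ℝ) = aw at *
  generalize (⟪b,c⟫ : ℝ) = bc at *
  generalize (⟪a,c⟫ : ℝ) = ac at *
  generalize (⟪b,a⟫ : ℝ) = ba at *
  generalize (⟪b,dz⟫ : ℝ) = bz at *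
  generalize (⟪a,dz⟫ : ℝ) = az at *
  have e1r : r*(k+r)*bw' = r*(k*bw + q*(k+r)*nb - s*(k+r)*bc - 2*ρ*k*ba) := by
    rw [← e1]; ring
  have ebk : k*((k+r)*bz) = k*(-r*bw - s*(k+r)*bc - 2*ρ*k*ba) := by rw [eb]
  have eak : k*((k+r)*az) = k*(-r*aw - s*(k+r)*ac - 2*ρ*k*na) := by rw [ea]
  have e3s : s/2*((k+r)^2*nd) = s/2*((k+r)^2*nc - 2*k*(k+r)*ac + k^2*na) := by rw [e3]
  linarith

set_option maxHeartbeats 4000000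

/-- Faster `o(1/k²)` convergence rate of the step-size-`s` SFBS method. -/
theorem sfbs_faster_rate
    {H : Type*} [NormedAddCommGroup H] [InnerProductSpace ℝ H] [CompleteSpace H]
    (L ρ s r D : ℝ) (F : H → H) (G : H → Set H)
    (z zh zt u Gt : ℕ → H)
    (hL : 0 < L) (hρ : -1/(2*L) < ρ)
    (hLip : ∀ x y : H, ‖F x - F y‖ ≤ L * ‖x - y‖)
    (hcomono : ∀ x y g h : H, g ∈ G x → h ∈ G y →
      ρ * ‖(F x + g) - (F y + h)‖^2 ≤ ⟪(F x + g) - (F y + h), x - y⟫)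
    (hsol : ∃ w : H, -F w ∈ G w)
    (hs0 : max 0 (-2*ρ) < s) (hs1 : s < 1/L)
    (hr : 1 < r) (hD0 : 0 < D) (hD : D < (r - 1) * (s + 2*ρ))
    (hu0 : u 0 = z 0) (hG0 : Gt 0 ∈ G (z 0))
    (hzt : ∀ k : ℕ, zt (k+1) = ((k : ℝ)/((k : ℝ) + r)) • z k + (r/((k : ℝ) + r)) • u k)
    (hzh : ∀ k : ℕ, zh k =
      zt (k+1) - ((k : ℝ)/((k : ℝ) + r) * (s + 2*ρ)) • (F (z k) + Gt k))
    (hz : ∀ k : ℕ, z (k+1) = zt (k+1) - s • (F (zh k) + Gt (k+1))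
        - ((2*ρ*(k : ℝ))/((k : ℝ) + r)) • (F (z k) + Gt k))
    (hGt : ∀ k : ℕ, Gt (k+1) ∈ G (z (k+1)))
    (hu : ∀ k : ℕ, u (k+1) = u k - (D/r) • (F (z (k+1)) + Gt (k+1))) :
    Tendsto (fun k : ℕ => ‖z k - u k‖^2) atTop (nhds 0) ∧
    (∀ zs : H, -F zs ∈ G zs →
      ∃ l : ℝ, Tendsto (fun k : ℕ => ‖u k - zs‖^2) atTop (nhds l)) ∧
    Tendsto (fun k : ℕ => (k : ℝ)^2 * ‖F (z k) + Gt k‖^2) atTop (nhds 0) ∧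
    Tendsto (fun k : ℕ => (k : ℝ)^2 * ‖z (k+1) - z k‖^2) atTop (nhds 0) := by
  classical
  have hs : 0 < s := lt_of_le_of_lt (le_max_left _ _) hs0
  have hσ : 0 < s + 2*ρ := by
    have := lt_of_le_of_lt (le_max_right 0 (-2*ρ)) hs0
    linarith
  have hr0 : 0 < r := by linarith
  have hsL : s * L < 1 := by rwa [lt_div_iff₀ hL] at hs1
  have hc0 : 0 < s/2*(1-s^2*L^2) := by
    have : s^2*L^2 < 1 := by
      have h0 : 0 < s*L := by positivity
      nlinarith
    have : 0 < 1 - s^2*L^2 := by linarith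
    positivity
  obtain ⟨A, hA⟩ : ∃ A : ℕ → H, ∀ k, A k = F (z k) + Gt k := ⟨_, fun _ => rfl⟩
  obtain ⟨c, hc⟩ : ∃ c : ℕ → H, ∀ k, c k = F (zh k) + Gt (k+1) := ⟨_, fun _ => rfl⟩
  obtain ⟨w, hw⟩ : ∃ w : ℕ → H, ∀ k, w k = z k - u k := ⟨_, fun _ => rfl⟩
  obtain ⟨d, hd⟩ : ∃ d : ℕ → H, ∀ k : ℕ, d k = c k - ((k:ℝ)/((k:ℝ)+r)) • A k :=
    ⟨_, fun _ => rfl⟩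
  have hkr : ∀ k : ℕ, 0 < (k:ℝ) + r := fun k => by positivity
  simp only [← hA, ← hc, ← hw] at hz hzh hu ⊢
  have hG : ∀ k, Gt k ∈ G (z k) := by
    intro k
    cases k with
    | zero => exact hG0
    | succ k => exact hGt k
  have hθ : ∀ k : ℕ, r/((k:ℝ)+r) = 1 - (k:ℝ)/((k:ℝ)+r) := by
    intro k
    have := hkr k
    field_simp
    ring
  have hwrec : ∀ k : ℕ, w (k+1) = ((k:ℝ)/((k:ℝ)+r)) • w k + (D/r) • A (k+1) - s • c k
      - (2*ρ*(k:ℝ)/((k:ℝ)+r)) • A k := by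
    intro k
    rw [hw, hw, hz, hu, hzt, hθ]
    module
  have hdz : ∀ k : ℕ, z (k+1) - z k = -((r/((k:ℝ)+r)) • w k) - s • c k
      - (2*ρ*(k:ℝ)/((k:ℝ)+r)) • A k := by
    intro k
    rw [hw, hz, hzt, hθ]
    module
  have hmon : ∀ k, ρ * ‖A (k+1) - A k‖^2 ≤ ⟪A (k+1) - A k, z (k+1) - z k⟫ := by
    intro k
    rw [hA, hA]
    exact hcomono _ _ _ _ (hG _) (hG _)
  have hlip : ∀ k, ‖c k - A (k+1)‖^2 ≤ L^2 * s^2 * ‖d k‖^2 := by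
    intro k
    have h1 : c k - A (k+1) = F (zh k) - F (z (k+1)) := by rw [hc, hA]; abel
    have h2 : zh k - z (k+1) = s • d k := by
      rw [hzh, hz, hd]
      module
    have h3 := hLip (zh k) (z (k+1))
    rw [h2, norm_smul, Real.norm_of_nonneg hs.le] at h3
    rw [h1]
    calc _ ≤ (L * (s * ‖d k‖))^2 := by gcongr
      _ = _ := by ring
  have hstep := fun k : ℕ => aux_step L ρ s r D (k:ℝ) (A k) (A (k+1)) (c k) (d k) (w k) (w (k+1))
    (z (k+1) - z k) hs hr (Nat.cast_nonneg k) (hwrec k) (hdz k) (hd k) (hmon k) (hlip k)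
  obtain ⟨Φ, hΦ⟩ : ∃ Φ : ℕ → ℝ, ∀ k : ℕ, Φ k =
    r*(k:ℝ)*⟪A k, w k⟫ + (s/2*(k:ℝ)^2+ρ*(k:ℝ)*((k:ℝ)-r))*‖A k‖^2 := ⟨_, fun _ => rfl⟩
  have hδ : 0 < (r-1)*(s+2*ρ) - D := by linarith
  set δ := (r-1)*(s+2*ρ) - D with hδdef
  set κ := s/2*(1-s^2*L^2) with hκ
  have hΦstep : ∀ k : ℕ, Φ (k+1) + κ*(((k:ℝ)+r)^2*‖d k‖^2) + r*(r-1)*⟪A (k+1), w (k+1)⟫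
      + (δ*((k:ℝ)+(r+1)/2) - r*(r-1)*ρ - (r-1)*D/2)*‖A (k+1)‖^2 ≤ Φ k := by
    intro k
    rw [hΦ, hΦ]
    push_cast
    exact hstep k
  -- energy
  have hsolmon : ∀ zs : H, -F zs ∈ G zs → ∀ k, ρ * ‖A k‖^2 ≤ ⟪A k, z k - zs⟫ := by
    intro zs hzs k
    have := hcomono (z k) zs (Gt k) (-F zs) (hG k) hzs
    rw [← hA] at this
    simpa using this
  set M := r^2*(r-1)/(2*D) with hM
  have hEstep : ∀ zs : H, -F zs ∈ G zs → ∀ k : ℕ,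
      (Φ (k+1) + M*‖u (k+1) - zs‖^2) + (κ*(((k:ℝ)+r)^2*‖d k‖^2)
        + δ*((k:ℝ)+(r+1)/2)*‖A (k+1)‖^2) ≤ (Φ k + M*‖u k - zs‖^2) := by
    intro zs hzs k
    have h1 := hΦstep k
    have h2 := hsolmon zs hzs (k+1)
    have h3 : z (k+1) - zs = w (k+1) + (u (k+1) - zs) := by rw [hw]; abel
    rw [h3, inner_add_right] at h2
    have h4 : u k - zs = (u (k+1) - zs) + (D/r) • A (k+1) := by rw [hu]; abel
    have h5 : M*‖u k - zs‖^2 = M*‖u (k+1) - zs‖^2 + r*(r-1)*⟪A (k+1), u (k+1) - zs⟫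
        + (r-1)*D/2*‖A (k+1)‖^2 := by
      rw [h4, norm_add_sq_real, inner_smul_right, norm_smul, mul_pow, Real.norm_eq_abs, sq_abs,
        real_inner_comm, hM]
      field_simp
    have h6 := mul_le_mul_of_nonneg_left h2 (by nlinarith : 0 ≤ r*(r-1))
    rw [h5]
    linarith
  have hElow : ∀ zs : H, -F zs ∈ G zs → ∃ ε > 0, ∀ k : ℕ,
      ε * ((k:ℝ)^2*‖A k‖^2) ≤ Φ k + M*‖u k - zs‖^2 := by
    intro zs hzs
    refine ⟨δ/(2*(r-1)), by have : 0 < r - 1 := by linarith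
                            positivity, fun k => ?_⟩
    have h2 := hsolmon zs hzs k
    have h3 : z k - zs = w k + (u k - zs) := by rw [hw]; abel
    rw [h3, inner_add_right] at h2
    have hr1 : 0 < r - 1 := by linarith
    have h5 : 0 ≤ ‖(D/(r*(r-1)) * (k:ℝ)) • A k - (u k - zs)‖^2 := sq_nonneg _
    rw [norm_sub_sq_real, inner_smul_left, norm_smul, mul_pow, Real.norm_eq_abs, sq_abs] at h5
    simp only [conj_trivial] at h5
    have hM0 : 0 < M := by rw [hM]; positivity
    have h6 := mul_nonneg hM0.le h5
    have h7 : M*((D/(r*(r-1)) * (k:ℝ))^2*‖A k‖^2 - 2*(D/(r*(r-1)) * (k:ℝ) * ⟪A k, u k - zs⟫)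
        + ‖u k - zs‖^2) = D/(2*(r-1))*((k:ℝ)^2*‖A k‖^2) - r*(k:ℝ)*⟪A k, u k - zs⟫
        + M*‖u k - zs‖^2 := by
      rw [hM]; field_simp
    rw [h7] at h6
    have h8 : δ/(2*(r-1)) = (s+2*ρ)/2 - D/(2*(r-1)) := by
      rw [hδdef]; field_simp
    rw [h8, hΦ]
    have h9 := mul_le_mul_of_nonneg_left h2 (by positivity : 0 ≤ r*(k:ℝ))
    linarith
  have hyn : ∀ k : ℕ, 0 ≤ κ*(((k:ℝ)+r)^2*‖d k‖^2) + δ*((k:ℝ)+(r+1)/2)*‖A (k+1)‖^2 :=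
    fun k => by positivity
  have hEconv : ∀ zs : H, -F zs ∈ G zs →
      (∃ l, Tendsto (fun k => Φ k + M*‖u k - zs‖^2) atTop (nhds l)) ∧
      Summable (fun k : ℕ => κ*(((k:ℝ)+r)^2*‖d k‖^2) + δ*((k:ℝ)+(r+1)/2)*‖A (k+1)‖^2) := by
    intro zs hzs
    obtain ⟨ε, hε, hl⟩ := hElow zs hzs
    refine aux_conv _ _ (fun _ => 0) 0 (fun n => le_trans (by positivity) (hl n)) hyn
      (fun _ => le_rfl) summable_zero (fun n => ?_)
    have := hEstep zs hzs n
    simpa using this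
  obtain ⟨w0, hw0⟩ := hsol
  have hsum := (hEconv w0 hw0).2
  have hsumd : Summable (fun k : ℕ => ((k:ℝ)+r)^2*‖d k‖^2) := by
    refine (summable_mul_left_iff hc0.ne').1 (Summable.of_nonneg_of_le (fun k => by positivity)
      (fun k => ?_) hsum)
    have : 0 ≤ δ*((k:ℝ)+(r+1)/2)*‖A (k+1)‖^2 := by positivity
    linarith
  have hsumA1 : Summable (fun k : ℕ => ((k:ℝ)+1)*‖A (k+1)‖^2) := by
    refine (summable_mul_left_iff hδ.ne').1 (Summable.of_nonneg_of_le (fun k => by positivity)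
      (fun k => ?_) hsum)
    have h1 : 0 ≤ κ*(((k:ℝ)+r)^2*‖d k‖^2) := by positivity
    have h2 : δ*(((k:ℝ)+1)*‖A (k+1)‖^2) ≤ δ*(((k:ℝ)+(r+1)/2)*‖A (k+1)‖^2) := by
      gcongr
      linarith
    linarith
  have hsumA : Summable (fun k : ℕ => (k:ℝ)*‖A k‖^2) := by
    refine (summable_nat_add_iff (f := fun k : ℕ => (k:ℝ)*‖A k‖^2) 1).1 ?_
    refine hsumA1.congr (fun k => ?_)
    push_cast
    rfl
  -- w
  have hr1 : 0 < r - 1 := by linarith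
  set e : ℕ → ℝ := fun k => 3/r*((D/r)^2*r*(((k:ℝ)+1)*‖A (k+1)‖^2)
    + s^2*(((k:ℝ)+r)^2*‖d k‖^2) + (s+2*ρ)^2*((k:ℝ)*‖A k‖^2)) with he
  have he0 : ∀ k, 0 ≤ e k := fun k => by simp only [he]; positivity
  have hesum : Summable e :=
    (((hsumA1.mul_left _).add (hsumd.mul_left _)).add (hsumA.mul_left _)).mul_left _
  have hwstep : ∀ k : ℕ, ‖w (k+1)‖^2 + r/((k:ℝ)+r)*‖w k‖^2 ≤ ‖w k‖^2 + e k := by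
    intro k
    have hk := hkr k
    have hk0 : (0:ℝ) ≤ k := Nat.cast_nonneg k
    obtain ⟨θ, hθd⟩ : ∃ θ : ℝ, θ = (k:ℝ)/((k:ℝ)+r) := ⟨_, rfl⟩
    have hθ0 : 0 ≤ θ := by rw [hθd]; positivity
    have hθ1 : 0 < 1 - θ := by rw [hθd, ← hθ]; positivity
    have hθ1' : θ ≤ 1 := by linarith
    obtain ⟨p, hp⟩ : ∃ p : H, p = (D/r) • A (k+1) - s • d k - ((s+2*ρ)*θ) • A k := ⟨_, rfl⟩
    have h1 : w (k+1) = θ • w k + p := by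
      rw [hwrec, hp, hd, hθd]
      module
    have h2 : ‖w (k+1)‖^2 ≤ θ*‖w k‖^2 + ((k:ℝ)+r)/r*‖p‖^2 := by
      have hinv : ((k:ℝ)+r)/r*(1-θ) = 1 := by rw [hθd, ← hθ]; field_simp
      have hq : ((k:ℝ)+r)/r = 1/(1-θ) := by rw [eq_div_iff hθ1.ne']; exact hinv
      rw [hq]
      have h3 : 0 ≤ ‖(1-θ) • w k - p‖^2 := sq_nonneg _
      rw [norm_sub_sq_real, inner_smul_left, norm_smul, mul_pow, Real.norm_eq_abs, sq_abs] at h3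
      simp only [conj_trivial] at h3
      rw [h1, norm_add_sq_real, inner_smul_left, norm_smul, mul_pow, Real.norm_eq_abs, sq_abs]
      simp only [conj_trivial]
      have h4 : θ*‖w k‖^2 + 1/(1-θ)*‖p‖^2 - (θ^2*‖w k‖^2 + 2*(θ*⟪w k, p⟫) + ‖p‖^2)
        = θ/(1-θ)*((1-θ)^2*‖w k‖^2 - 2*((1-θ)*⟪w k, p⟫) + ‖p‖^2) := by
        field_simp
        ring
      have h5 : 0 ≤ θ/(1-θ)*((1-θ)^2*‖w k‖^2 - 2*((1-θ)*⟪w k, p⟫) + ‖p‖^2) := by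
        positivity
      linarith
    have h3 : ‖p‖^2 ≤ 3*((D/r)^2*‖A (k+1)‖^2 + s^2*‖d k‖^2 + (s+2*ρ)^2*θ^2*‖A k‖^2) := by
      have h4 : ‖p‖ ≤ D/r*‖A (k+1)‖ + s*‖d k‖ + (s+2*ρ)*θ*‖A k‖ := by
        rw [hp]
        refine (norm_sub_le _ _).trans ?_
        have h5 := norm_sub_le ((D/r) • A (k+1)) (s • d k)
        rw [norm_smul, norm_smul, Real.norm_of_nonneg hs.le,
          Real.norm_of_nonneg (by positivity : 0 ≤ D/r)] at h5
        rw [norm_smul ((s+2*ρ)*θ), Real.norm_of_nonneg (by positivity : 0 ≤ (s+2*ρ)*θ)]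
        linarith
      have h6 : ‖p‖^2 ≤ (D/r*‖A (k+1)‖ + s*‖d k‖ + (s+2*ρ)*θ*‖A k‖)^2 := by gcongr
      have : (D/r)^2*‖A (k+1)‖^2 + s^2*‖d k‖^2 + (s+2*ρ)^2*θ^2*‖A k‖^2 =
        (D/r*‖A (k+1)‖)^2 + (s*‖d k‖)^2 + ((s+2*ρ)*θ*‖A k‖)^2 := by ring
      rw [this]
      have h7 : ∀ x y t : ℝ, (x+y+t)^2 ≤ 3*(x^2+y^2+t^2) := fun x y t => by
        nlinarith [sq_nonneg (x-y), sq_nonneg (x-t), sq_nonneg (y-t)]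
      exact h6.trans (h7 _ _ _)
    have h4 : ((k:ℝ)+r)/r*‖p‖^2 ≤ e k := by
      have h5 : ((k:ℝ)+r)*‖A (k+1)‖^2 ≤ r*(((k:ℝ)+1)*‖A (k+1)‖^2) := by
        rw [← mul_assoc]
        gcongr
        nlinarith
      have h6 : ((k:ℝ)+r)*‖d k‖^2 ≤ ((k:ℝ)+r)^2*‖d k‖^2 := by
        gcongr
        nlinarith
      have h7 : ((k:ℝ)+r)*(θ^2*‖A k‖^2) ≤ (k:ℝ)*‖A k‖^2 := by
        rw [← mul_assoc]
        gcongr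
        have : ((k:ℝ)+r)*θ = k := by rw [hθd]; field_simp
        rw [pow_two, ← mul_assoc, this]
        nlinarith
      calc ((k:ℝ)+r)/r*‖p‖^2 ≤ ((k:ℝ)+r)/r*(3*((D/r)^2*‖A (k+1)‖^2 + s^2*‖d k‖^2
            + (s+2*ρ)^2*θ^2*‖A k‖^2)) := by gcongr
        _ = 3/r*((D/r)^2*(((k:ℝ)+r)*‖A (k+1)‖^2) + s^2*(((k:ℝ)+r)*‖d k‖^2)
            + (s+2*ρ)^2*(((k:ℝ)+r)*(θ^2*‖A k‖^2))) := by ring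
        _ ≤ 3/r*((D/r)^2*(r*(((k:ℝ)+1)*‖A (k+1)‖^2)) + s^2*(((k:ℝ)+r)^2*‖d k‖^2)
            + (s+2*ρ)^2*((k:ℝ)*‖A k‖^2)) := by gcongr
        _ = e k := by simp only [he]; ring
    rw [hθ, ← hθd]
    linarith
  obtain ⟨⟨lw, hlw⟩, hsw⟩ := aux_conv (fun k => ‖w k‖^2) (fun k : ℕ => r/((k:ℝ)+r)*‖w k‖^2) e 0
    (fun n => by positivity) (fun n => by positivity) he0 hesum hwstep
  have hsw1 : Summable (fun k : ℕ => ‖w k‖^2/((k:ℝ)+1)) := by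
    refine Summable.of_nonneg_of_le (fun k => by positivity) (fun k => ?_) hsw
    have hk := hkr k
    have hk0 : (0:ℝ) ≤ k := Nat.cast_nonneg k
    rw [div_mul_eq_mul_div, div_le_div_iff₀ (by positivity) hk]
    nlinarith [mul_nonneg (mul_nonneg hr1.le hk0) (sq_nonneg ‖w k‖)]
  have hlw0 := aux_zero _ lw (fun n => by positivity) hlw hsw1
  subst hlw0
  have hwn : Tendsto (fun k => ‖w k‖) atTop (nhds 0) := by
    have := hlw.sqrt
    simpa [Real.sqrt_sq] using this
  -- bound for k * ‖A k‖
  obtain ⟨C, hC⟩ : ∃ C, ∀ k : ℕ, (k:ℝ)*‖A k‖ ≤ C := by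
    obtain ⟨⟨l, hl⟩, -⟩ := hEconv w0 hw0
    obtain ⟨ε, hε, hlow⟩ := hElow w0 hw0
    obtain ⟨B, hB⟩ := hl.bddAbove_range
    refine ⟨Real.sqrt (B/ε), fun k => Real.le_sqrt_of_sq_le ?_⟩
    rw [le_div_iff₀ hε]
    have h1 := hlow k
    have h2 : Φ k + M*‖u k - w0‖^2 ≤ B := hB ⟨k, rfl⟩
    linarith
  have hin : Tendsto (fun k : ℕ => (k:ℝ)*⟪A k, w k⟫) atTop (nhds 0) := by
    refine squeeze_zero_norm (a := fun k => C*‖w k‖) (fun k => ?_) (by simpa using hwn.const_mul C)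
    rw [norm_mul, Real.norm_natCast]
    calc (k:ℝ)*‖⟪A k, w k⟫‖ ≤ (k:ℝ)*(‖A k‖*‖w k‖) := by
          gcongr
          exact norm_inner_le_norm _ _
      _ = ((k:ℝ)*‖A k‖)*‖w k‖ := by ring
      _ ≤ C*‖w k‖ := by
          gcongr
          exact hC k
  have ho : Tendsto (fun k : ℕ => r*((k:ℝ)*⟪A k, w k⟫) - ρ*r*((k:ℝ)*‖A k‖^2)) atTop (nhds 0) := by
    have := (hin.const_mul r).sub (hsumA.tendsto_atTop_zero.const_mul (ρ*r))
    simpa using this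
  have hΦeq : ∀ k : ℕ, Φ k = (s+2*ρ)/2*((k:ℝ)^2*‖A k‖^2)
      + (r*((k:ℝ)*⟪A k, w k⟫) - ρ*r*((k:ℝ)*‖A k‖^2)) := by
    intro k
    rw [hΦ]
    ring
  obtain ⟨B, hB⟩ := ho.bddBelow_range
  have hΦlow : ∀ k, B ≤ Φ k := by
    intro k
    have h1 : B ≤ r*((k:ℝ)*⟪A k, w k⟫) - ρ*r*((k:ℝ)*‖A k‖^2) := hB ⟨k, rfl⟩
    rw [hΦeq]
    have : 0 ≤ (s+2*ρ)/2*((k:ℝ)^2*‖A k‖^2) := by positivity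
    linarith
  have hsw2 : Summable (fun k : ℕ => ‖w (k+1)‖^2/((k:ℝ)+2)) := by
    refine ((summable_nat_add_iff (f := fun k : ℕ => ‖w k‖^2/((k:ℝ)+1)) 1).2 hsw1).congr
      (fun k => ?_)
    push_cast
    congr 1
    ring
  obtain ⟨lΦ, hlΦ⟩ := (aux_conv Φ (fun _ => 0)
    (fun k : ℕ => (r*(r-1) + r*(r-1)*|ρ| + (r-1)*D/2)*(((k:ℝ)+1)*‖A (k+1)‖^2)
      + r*(r-1)/2*(‖w (k+1)‖^2/((k:ℝ)+2))) B hΦlow (fun _ => le_rfl)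
    (fun k => by positivity) ((hsumA1.mul_left _).add (hsw2.mul_left _)) (fun k => by
      have h1 := hΦstep k
      have hk0 : (0:ℝ) ≤ k := Nat.cast_nonneg k
      have h2 : 0 ≤ κ*(((k:ℝ)+r)^2*‖d k‖^2) := by positivity
      have h3 : 0 ≤ δ*((k:ℝ)+(r+1)/2)*‖A (k+1)‖^2 := by positivity
      have h4 : ‖A (k+1)‖^2 ≤ ((k:ℝ)+1)*‖A (k+1)‖^2 :=
        le_mul_of_one_le_left (by positivity) (by linarith)
      have h5 : -⟪A (k+1), w (k+1)⟫ ≤ ((k:ℝ)+1)*‖A (k+1)‖^2 + 1/2*(‖w (k+1)‖^2/((k:ℝ)+2)) := by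
        have h6 : -⟪A (k+1), w (k+1)⟫ ≤ ‖A (k+1)‖*‖w (k+1)‖ := by
          have := abs_real_inner_le_norm (A (k+1)) (w (k+1))
          linarith [neg_abs_le (⟪A (k+1), w (k+1)⟫)]
        have h7 : ‖A (k+1)‖*‖w (k+1)‖ ≤ ((k:ℝ)+2)/2*‖A (k+1)‖^2
            + 1/2*(‖w (k+1)‖^2/((k:ℝ)+2)) := by
          have h8 : ((k:ℝ)+2)/2*‖A (k+1)‖^2 + 1/2*(‖w (k+1)‖^2/((k:ℝ)+2))
            - ‖A (k+1)‖*‖w (k+1)‖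
            = (((k:ℝ)+2)*‖A (k+1)‖ - ‖w (k+1)‖)^2/(2*((k:ℝ)+2)) := by
            field_simp
            ring
          have h9 : 0 ≤ (((k:ℝ)+2)*‖A (k+1)‖ - ‖w (k+1)‖)^2/(2*((k:ℝ)+2)) := by positivity
          linarith
        have h10 : ((k:ℝ)+2)/2*‖A (k+1)‖^2 ≤ ((k:ℝ)+1)*‖A (k+1)‖^2 := by
          gcongr
          linarith
        linarith
      have h11 := mul_le_mul_of_nonneg_left h5 (by positivity : 0 ≤ r*(r-1))
      have h12 : r*(r-1)*ρ*‖A (k+1)‖^2 ≤ r*(r-1)*|ρ| *(((k:ℝ)+1)*‖A (k+1)‖^2) := by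
        refine mul_le_mul ?_ h4 (by positivity) (by positivity)
        gcongr
        exact le_abs_self ρ
      have h13 := mul_le_mul_of_nonneg_left h4 (by positivity : 0 ≤ (r-1)*D/2)
      linarith)).1
  have hX : Tendsto (fun k : ℕ => (k:ℝ)^2*‖A k‖^2) atTop (nhds (2/(s+2*ρ)*(lΦ-0))) := by
    refine ((hlΦ.sub ho).const_mul (2/(s+2*ρ))).congr (fun k => ?_)
    rw [hΦeq]
    field_simp
    ring
  have hX0 := aux_zero _ _ (fun n => by positivity) hX (by
    refine Summable.of_nonneg_of_le (fun k => by positivity) (fun k => ?_) hsumA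
    rw [div_le_iff₀ (by positivity)]
    have : 0 ≤ (k:ℝ)*‖A k‖^2 := by positivity
    linarith)
  rw [hX0] at hX
  have hlΦ0 : lΦ = 0 := by
    have : 2/(s+2*ρ) ≠ 0 := by positivity
    simpa [this, hσ.ne'] using hX0
  subst hlΦ0
  refine ⟨hlw, ?_, hX, ?_⟩
  · intro zs hzs
    obtain ⟨⟨l, hl⟩, -⟩ := hEconv zs hzs
    have hM0 : 0 < M := by rw [hM]; positivity
    refine ⟨M⁻¹*(l-0), ((hl.sub hlΦ).const_mul M⁻¹).congr (fun k => ?_)⟩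
    field_simp
    ring
  · have hAn : Tendsto (fun k : ℕ => (k:ℝ)*‖A k‖) atTop (nhds 0) := by
      have := hX.sqrt
      rw [Real.sqrt_zero] at this
      refine this.congr (fun k => ?_)
      rw [← mul_pow, Real.sqrt_sq (by positivity)]
    have hdn : Tendsto (fun k : ℕ => ((k:ℝ)+r)*‖d k‖) atTop (nhds 0) := by
      have := hsumd.tendsto_atTop_zero.sqrt
      rw [Real.sqrt_zero] at this
      refine this.congr (fun k => ?_)
      rw [← mul_pow, Real.sqrt_sq (by positivity)]
    have hfin : Tendsto (fun k : ℕ => (k:ℝ)*‖z (k+1) - z k‖) atTop (nhds 0) := by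
      refine squeeze_zero (g := fun k : ℕ => r*‖w k‖ + s*(((k:ℝ)+r)*‖d k‖)
        + (s+2*ρ)*((k:ℝ)*‖A k‖)) (fun k => by positivity) (fun k => ?_) ?_
      · have hk := hkr k
        have h1 : ((k:ℝ)+r) • (z (k+1) - z k) = -(r • w k) - (s*((k:ℝ)+r)) • d k
            - ((s+2*ρ)*(k:ℝ)) • A k := by
          rw [hdz, hd]
          match_scalars <;> field_simp
          ring
        have h2 : ((k:ℝ)+r)*‖z (k+1) - z k‖ ≤ r*‖w k‖ + s*(((k:ℝ)+r)*‖d k‖)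
            + (s+2*ρ)*((k:ℝ)*‖A k‖) := by
          have h3 : ‖((k:ℝ)+r) • (z (k+1) - z k)‖ = ((k:ℝ)+r)*‖z (k+1) - z k‖ := by
            rw [norm_smul, Real.norm_of_nonneg hk.le]
          rw [← h3, h1]
          refine (norm_sub_le _ _).trans ?_
          have h5 := norm_sub_le (-(r • w k)) ((s*((k:ℝ)+r)) • d k)
          rw [norm_neg, norm_smul, norm_smul, Real.norm_of_nonneg hr0.le,
            Real.norm_of_nonneg (by positivity : 0 ≤ s*((k:ℝ)+r))] at h5
          rw [norm_smul ((s+2*ρ)*(k:ℝ)), Real.norm_of_nonneg (by positivity : 0 ≤ (s+2*ρ)*(k:ℝ))]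
          linarith
        have h4 : 0 ≤ r*‖z (k+1) - z k‖ := by positivity
        linarith
      · have := ((hwn.const_mul r).add (hdn.const_mul s)).add (hAn.const_mul (s+2*ρ))
        simpa using this
    have := hfin.pow 2
    simpa [mul_pow] using this
end

section
/- (Weak convergence) Under the step-size-s SFBS iteration with F L-Lipschitz, G maximally monotone, T = F + G ρ-comonotone, ρ > −1/(2L), max{0, −2ρ} < s < 1/L, r > 1 and 0 < D < (r−1)(s + 2ρ), both sequences (z_k) and (u_k) converge weakly to the same point z∞ satisfying −F(z∞) ∈ G(z∞). -/
open RealInnerProductSpace Filter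

lemma aux_desc (E v : ℕ → ℝ) (N : ℕ) (hE : ∀ k, 0 ≤ E k) (hv : ∀ k, N ≤ k → 0 ≤ v k)
    (h : ∀ k, N ≤ k → E (k+1) + v k ≤ E k) :
    (∃ l, Tendsto E atTop (nhds l)) ∧ Summable v := by
  constructor
  · have hanti : Antitone (fun k => E (k + N)) := by
      apply antitone_nat_of_succ_le
      intro k
      have h1 := h (k+N) (by omega)
      have h2 := hv (k+N) (by omega)
      have e : k + 1 + N = k + N + 1 := by omega
      simp only [e]; linarith
    have := tendsto_atTop_ciInf hanti ⟨0, by rintro _ ⟨k, rfl⟩; exact hE _⟩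
    exact ⟨_, (tendsto_add_atTop_iff_nat N).1 this⟩
  · rw [← summable_nat_add_iff N]
    apply summable_of_sum_range_le (c := E N) (fun k => hv _ (by omega))
    intro n
    have : ∑ i ∈ Finset.range n, v (i + N) + E (n + N) ≤ E N := by
      induction n with
      | zero => simp
      | succ n ih =>
        rw [Finset.sum_range_succ]
        have h1 := h (n+N) (by omega)
        have e : n + 1 + N = n + N + 1 := by omega
        rw [e]; linarith
    linarith [hE (n+N)]

lemma aux_zero_s9 (x v : ℕ → ℝ) (r : ℝ) (hr : 0 < r) (hx : ∀ k, 0 ≤ x k) (hv : ∀ k, 0 ≤ v k)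
    (hs : Summable v) (h : ∀ k : ℕ, x (k+1) ≤ (k : ℝ)/((k:ℝ)+r) * x k + v k) :
    Tendsto x atTop (nhds 0) := by
  have key := aux_desc (fun k => x k + (∑' i, v i - ∑ i ∈ Finset.range k, v i))
    (fun k => r / ((k:ℝ)+r) * x k) 0
    (fun k => by
      have := hs.sum_le_tsum (Finset.range k) (fun i _ => hv i)
      have := hx k
      linarith)
    (fun k _ => by have := hx k; positivity)
    (fun k _ => by
      have h1 := h k
      have h2 : (k:ℝ)/((k:ℝ)+r) = 1 - r/((k:ℝ)+r) := by
        have : (k:ℝ)+r ≠ 0 := by positivity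
        field_simp; ring
      rw [h2] at h1
      simp only [Finset.sum_range_succ]
      linarith)
  obtain ⟨⟨l, hl⟩, hsum⟩ := key
  have hxl : Tendsto x atTop (nhds l) := by
    have h2 := hs.hasSum.tendsto_sum_nat
    have h3 : Tendsto (fun k => (∑' i, v i - ∑ i ∈ Finset.range k, v i)) atTop (nhds 0) := by
      simpa using h2.const_sub (∑' i, v i)
    have := hl.sub h3
    simpa using this
  have hl0 : 0 ≤ l := ge_of_tendsto' hxl hx
  rcases hl0.eq_or_lt with h0 | h0
  · rw [h0]; exact hxl
  exfalso
  have hev : ∀ᶠ k in atTop, l/2 < x k := hxl.eventually (lt_mem_nhds (by linarith))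
  obtain ⟨N, hN⟩ := eventually_atTop.1 hev
  obtain ⟨M, hM⟩ := exists_nat_gt r
  have hs2 : Summable (fun k : ℕ => (1:ℝ)/((k + (N+M+1) : ℕ) : ℝ)) := by
    have hs3 := (summable_nat_add_iff (N+M+1)).2 hsum
    have hs4 := hs3.mul_left (4/(r*l))
    refine Summable.of_nonneg_of_le (fun k => by positivity) (fun k => ?_) hs4
    have hxk := hN (k+(N+M+1)) (by omega)
    set n : ℝ := ((k + (N+M+1) : ℕ) : ℝ) with hn
    have hn1 : r ≤ n := by
      have : (M:ℝ) ≤ n := by rw [hn]; exact_mod_cast (by omega)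
      linarith
    have hnp : 0 < n := by linarith
    calc (1:ℝ)/n = 4/(r*l) * (r/(n+n) * (l/2)) := by field_simp; ring
      _ ≤ 4/(r*l) * (r/(n+r) * x (k+(N+M+1))) := by gcongr
  rw [summable_nat_add_iff (f := fun k : ℕ => (1:ℝ)/(k:ℝ)) (N+M+1)] at hs2
  exact Real.not_summable_one_div_natCast hs2

lemma aux_hull {H : Type*} [NormedAddCommGroup H] [InnerProductSpace ℝ H]
    (S : Set (H × H)) (hS : ∀ p ∈ S, ∀ q ∈ S, 0 ≤ ⟪p.2 - q.2, p.1 - q.1⟫) :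
    ∀ p ∈ convexHull ℝ ((fun p : H × H => ((p.1, p.2, ⟪p.1, p.2⟫) : H × H × ℝ)) '' S),
      ⟪p.1, p.2.1⟫ ≤ p.2.2 := by
  set Q := ((fun p : H × H => ((p.1, p.2, ⟪p.1, p.2⟫) : H × H × ℝ)) '' S) with hQ
  have hconv : ∀ q : H × H × ℝ, Convex ℝ
      {p : H × H × ℝ | 0 ≤ p.2.2 + q.2.2 - ⟪p.1, q.2.1⟫ - ⟪q.1, p.2.1⟫} := by
    intro q x hx y hy a b ha hb hab
    simp only [Set.mem_ofPred_eq, Prod.fst_add, Prod.snd_add, Prod.smul_fst, Prod.smul_snd,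
      inner_add_left, inner_add_right, inner_smul_left, inner_smul_right, smul_eq_mul] at *
    simp only [RCLike.conj_to_real] at *
    have h1 := mul_nonneg ha hx
    have h2 := mul_nonneg hb hy
    have h3 : q.2.2 = (a+b)*q.2.2 := by rw [hab, one_mul]
    rw [h3]
    linarith
  have h1 : ∀ q ∈ Q, ∀ p ∈ convexHull ℝ Q,
      0 ≤ p.2.2 + q.2.2 - ⟪p.1, q.2.1⟫ - ⟪q.1, p.2.1⟫ := by
    rintro _ ⟨q, hq, rfl⟩
    apply convexHull_min _ (hconv _)
    rintro _ ⟨p, hp, rfl⟩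
    have := hS p hp q hq
    simp only [inner_sub_left, inner_sub_right] at this
    simp only [Set.mem_ofPred_eq]
    rw [real_inner_comm p.2 p.1, real_inner_comm q.2 q.1, real_inner_comm q.2 p.1,
      real_inner_comm p.2 q.1]
    linarith
  have h2 : ∀ q ∈ convexHull ℝ Q, ∀ p ∈ convexHull ℝ Q,
      0 ≤ p.2.2 + q.2.2 - ⟪p.1, q.2.1⟫ - ⟪q.1, p.2.1⟫ := by
    intro q hq
    apply convexHull_min _ (hconv _)
    intro p hp
    have := h1 p hp q hq
    simp only [Set.mem_ofPred_eq]
    linarith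
  intro p hp
  have := h2 p hp p hp
  linarith

lemma aux_minty {H : Type*} [NormedAddCommGroup H] [InnerProductSpace ℝ H] [CompleteSpace H]
    (S : Set (H × H)) (hS : ∀ p ∈ S, ∀ q ∈ S, 0 ≤ ⟪p.2 - q.2, p.1 - q.1⟫) :
    ∃ x : H, ∀ p ∈ S, 0 ≤ ⟪-x - p.2, x - p.1⟫ := by
  rcases S.eq_empty_or_nonempty with h0 | ⟨p0, hp0⟩
  · exact ⟨0, by simp [h0]⟩
  set Q := ((fun p : H × H => ((p.1, p.2, ⟪p.1, p.2⟫) : H × H × ℝ)) '' S) with hQ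
  set K := convexHull ℝ Q with hK
  have hKc : Convex ℝ K := convex_convexHull ℝ Q
  set q : H × H × ℝ → ℝ := fun p => p.2.2 + 1/4 * ‖p.2.1 - p.1‖^2 with hq
  have hq0 : ∀ p ∈ K, 0 ≤ q p := by
    intro p hp
    have h1 := aux_hull S hS p hp
    have h2 := norm_sub_sq_real p.2.1 p.1
    have h3 := norm_add_sq_real p.2.1 p.1
    rw [real_inner_comm] at h2 h3
    have h4 := sq_nonneg ‖p.2.1 + p.1‖
    simp only [hq]
    nlinarith
  have hne : (q '' K).Nonempty := ⟨_, _, subset_convexHull ℝ Q ⟨p0, hp0, rfl⟩, rfl⟩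
  have hbdd : BddBelow (q '' K) := ⟨0, by rintro _ ⟨p, hp, rfl⟩; exact hq0 p hp⟩
  set m := sInf (q '' K) with hm
  have hm0 : 0 ≤ m := le_csInf hne (by rintro _ ⟨p, hp, rfl⟩; exact hq0 p hp)
  have hmq : ∀ p ∈ K, m ≤ q p := fun p hp => csInf_le hbdd ⟨p, hp, rfl⟩
  have hseq : ∀ n : ℕ, ∃ p ∈ K, q p < m + 1/((n:ℝ)+1) := by
    intro n
    obtain ⟨_, ⟨p, hp, rfl⟩, h⟩ := exists_lt_of_csInf_lt hne
      (show sInf (q '' K) < m + 1/((n:ℝ)+1) by rw [← hm]; linarith [Nat.one_div_pos_of_nat (α := ℝ) (n := n)])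
    exact ⟨p, hp, h⟩
  choose p hpK hpq using hseq
  set v : ℕ → H := fun n => (p n).2.1 - (p n).1 with hvdef
  -- Cauchy
  have hpar : ∀ a ∈ K, ∀ b ∈ K, 1/16 * ‖(a.2.1 - a.1) - (b.2.1 - b.1)‖^2 ≤ (q a + q b)/2 - m := by
    intro a ha b hb
    have hmid := hmq _ (hKc ha hb (show (0:ℝ) ≤ 1/2 by norm_num) (show (0:ℝ) ≤ 1/2 by norm_num) (by norm_num))
    simp only [hq, Prod.fst_add, Prod.snd_add, Prod.smul_fst, Prod.smul_snd, smul_eq_mul] at hmid ⊢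
    have e : (1/2:ℝ) • a.2.1 + (1/2:ℝ) • b.2.1 - ((1/2:ℝ) • a.1 + (1/2:ℝ) • b.1)
      = (1/2:ℝ) • ((a.2.1 - a.1) + (b.2.1 - b.1)) := by module
    rw [e, norm_smul, mul_pow] at hmid
    have h1 := norm_add_sq_real (a.2.1 - a.1) (b.2.1 - b.1)
    have h2 := norm_sub_sq_real (a.2.1 - a.1) (b.2.1 - b.1)
    norm_num at hmid
    linarith
  have hcau : CauchySeq v := by
    rw [Metric.cauchySeq_iff']
    intro ε hε
    obtain ⟨N, hN⟩ := exists_nat_one_div_lt (show 0 < ε^2/16 by positivity)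
    refine ⟨N, fun n hn => ?_⟩
    have h1 := hpar _ (hpK n) _ (hpK N)
    have h2 := hpq n
    have h3 := hpq N
    have h4 : 1/((n:ℝ)+1) ≤ 1/((N:ℝ)+1) := by gcongr
    have h5 : ‖v n - v N‖^2 < ε^2 := by simp only [hvdef]; linarith
    rw [dist_eq_norm]
    exact lt_of_pow_lt_pow_left₀ 2 hε.le h5
  obtain ⟨w, hw⟩ := cauchySeq_tendsto_of_complete hcau
  have hqm : Tendsto (fun n => q (p n)) atTop (nhds m) := by
    refine tendsto_of_tendsto_of_tendsto_of_le_of_le tendsto_const_nhds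
      (?_ : Tendsto (fun n : ℕ => m + 1/((n:ℝ)+1)) atTop (nhds m)) (fun n => hmq _ (hpK n)) (fun n => (hpq n).le)
    simpa using (tendsto_const_nhds (x := m)).add (tendsto_one_div_add_atTop_nhds_zero_nat (𝕜 := ℝ))
  have hv2 : Tendsto (fun n => ‖v n‖^2) atTop (nhds (‖w‖^2)) := (hw.norm).pow 2
  have ht : Tendsto (fun n => (p n).2.2) atTop (nhds (m - 1/4*‖w‖^2)) := by
    have := hqm.sub (hv2.const_mul (1/4))
    simpa [hq, hvdef] using this
  refine ⟨-(1/2:ℝ) • w, fun a ha => ?_⟩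
  have haK : ((a.1, a.2, ⟪a.1, a.2⟫) : H × H × ℝ) ∈ K := subset_convexHull ℝ Q ⟨a, ha, rfl⟩
  set va := a.2 - a.1 with hva
  set ta := ⟪a.1, a.2⟫ with hta
  have hvar : ∀ θ : ℝ, 0 < θ → θ ≤ 1 →
      m ≤ ((1-θ)*(m - 1/4*‖w‖^2) + θ * ta) + 1/4*‖(1-θ) • w + θ • va‖^2 := by
    intro θ h0 h1
    have hlim : Tendsto (fun n => ((1-θ)*(p n).2.2 + θ * ta) + 1/4*‖(1-θ) • v n + θ • va‖^2) atTop
        (nhds (((1-θ)*(m - 1/4*‖w‖^2) + θ * ta) + 1/4*‖(1-θ) • w + θ • va‖^2)) := by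
      refine ((ht.const_mul _).add_const _).add (Tendsto.const_mul _ (Tendsto.pow (Tendsto.norm ?_) 2))
      exact (hw.const_smul _).add_const _
    refine ge_of_tendsto' hlim (fun n => ?_)
    have := hmq _ (hKc (hpK n) haK (show 0 ≤ 1-θ by linarith) h0.le (by ring))
    simp only [hq, Prod.fst_add, Prod.snd_add, Prod.smul_fst, Prod.smul_snd, smul_eq_mul] at this
    have e : (1-θ) • v n + θ • va = (1-θ) • (p n).2.1 + θ • a.2 - ((1-θ) • (p n).1 + θ • a.1) := by
      simp only [hvdef, hva]; module
    rw [e]; exact this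
  have hexp : ∀ θ : ℝ, ‖(1-θ) • w + θ • va‖^2 = (1-θ)^2*‖w‖^2 + 2*(1-θ)*θ*⟪w, va⟫ + θ^2*‖va‖^2 := by
    intro θ
    rw [norm_add_sq_real, norm_smul, norm_smul, mul_pow, mul_pow, inner_smul_left, inner_smul_right]
    simp only [Real.norm_eq_abs, sq_abs, RCLike.conj_to_real]; ring
  set X := ta - (m - 1/4*‖w‖^2) + 1/2*(⟪w, va⟫ - ‖w‖^2) with hX
  set Y := 1/4*(‖w‖^2 - 2*⟪w, va⟫ + ‖va‖^2) with hY
  have hXY : ∀ θ : ℝ, 0 < θ → θ ≤ 1 → 0 ≤ X + θ * Y := by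
    intro θ h0 h1
    have h2 := hvar θ h0 h1
    rw [hexp] at h2
    have : 0 ≤ θ * (X + θ*Y) := by rw [hX, hY]; linarith
    exact nonneg_of_mul_nonneg_right this h0
  have hX0 : 0 ≤ X := by
    have hlim : Tendsto (fun n : ℕ => X + 1/((n:ℝ)+1) * Y) atTop (nhds X) := by
      simpa using (tendsto_const_nhds (x := X)).add
        ((tendsto_one_div_add_atTop_nhds_zero_nat (𝕜 := ℝ)).mul_const Y)
    refine ge_of_tendsto' hlim (fun n => hXY _ Nat.one_div_pos_of_nat ?_)
    rw [div_le_one (by positivity)]; linarith [Nat.cast_nonneg (α := ℝ) n]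
  have hfin : ⟪-(-(1/2:ℝ) • w) - a.2, -(1/2:ℝ) • w - a.1⟫
      = ta + 1/2 * ⟪w, va⟫ - 1/4 * ‖w‖^2 := by
    rw [hta, hva, ← real_inner_self_eq_norm_sq]
    simp only [inner_sub_left, inner_sub_right, inner_neg_left, inner_smul_left, inner_smul_right,
      RCLike.conj_to_real, inner_neg_right, neg_smul]
    rw [real_inner_comm a.2 w, real_inner_comm a.2 a.1]
    ring
  rw [hfin]
  rw [hX] at hX0
  linarith

lemma aux_resolvent {H : Type*} [NormedAddCommGroup H] [InnerProductSpace ℝ H] [CompleteSpace H]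
    (L s : ℝ) (F : H → H) (G : H → Set H) (hL : 0 < L)
    (hLip : ∀ x y : H, ‖F x - F y‖ ≤ L * ‖x - y‖)
    (hGmono : ∀ x y g h : H, g ∈ G x → h ∈ G y → 0 ≤ ⟪g - h, x - y⟫)
    (hGmax : ∀ x w : H, (∀ y h : H, h ∈ G y → 0 ≤ ⟪w - h, x - y⟫) → w ∈ G x)
    (hs0 : 0 < s) (hs1 : s * L < 1) (p : H) :
    ∃ y h : H, h ∈ G y ∧ y + s • (F y + h) = p := by
  have hJ : ∀ w : H, ∃ y : H, ∃ h ∈ G y, y + s • h = w := by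
    intro w
    obtain ⟨x, hx⟩ := aux_minty {a : H × H | ∃ y, ∃ h ∈ G y, a = (y, s • h - w)} (by
      rintro _ ⟨y, h, hh, rfl⟩ _ ⟨y', h', hh', rfl⟩
      have := hGmono _ _ _ _ hh hh'
      have e : s • h - w - (s • h' - w) = s • (h - h') := by module
      simp only [e, inner_smul_left, RCLike.conj_to_real]
      positivity)
    refine ⟨x, s⁻¹ • (w - x), hGmax _ _ ?_, ?_⟩
    · intro y h hh
      have := hx (y, s • h - w) ⟨y, h, hh, rfl⟩
      have e : s⁻¹ • (w - x) - h = s⁻¹ • (-x - (s • h - w)) := by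
        have : h = s⁻¹ • (s • h) := by rw [smul_smul, inv_mul_cancel₀ hs0.ne', one_smul]
        conv_lhs => rw [this]
        module
      rw [e, inner_smul_left]
      simp only [RCLike.conj_to_real]
      exact mul_nonneg (by positivity) this
    · rw [smul_smul, mul_inv_cancel₀ hs0.ne', one_smul]; abel
  choose J g hg hJg using hJ
  have hJ1 : ∀ w w', ‖J w - J w'‖ ≤ ‖w - w'‖ := by
    intro w w'
    have h1 := hGmono _ _ _ _ (hg w) (hg w')
    have h2 : w - w' = (J w - J w') + s • (g w - g w') := by
      conv_lhs => rw [← hJg w, ← hJg w']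
      module
    have h3 : ‖J w - J w'‖^2 ≤ ⟪w - w', J w - J w'⟫ := by
      rw [h2, inner_add_left, inner_smul_left, real_inner_self_eq_norm_sq]
      simp only [RCLike.conj_to_real]
      have := mul_nonneg hs0.le h1
      linarith
    have h4 := real_inner_le_norm (w - w') (J w - J w')
    rcases (norm_nonneg (J w - J w')).eq_or_lt with h5 | h5
    · rw [← h5]; positivity
    · nlinarith
  have hcontr : ContractingWith ⟨s * L, by positivity⟩ (fun y => J (p - s • F y)) := by
    refine ⟨by exact_mod_cast hs1, LipschitzWith.of_dist_le_mul (fun x y => ?_)⟩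
    rw [dist_eq_norm, dist_eq_norm]
    refine (hJ1 _ _).trans ?_
    have e : p - s • F x - (p - s • F y) = -(s • (F x - F y)) := by module
    rw [e, norm_neg, norm_smul, Real.norm_of_nonneg hs0.le]
    have := mul_le_mul_of_nonneg_left (hLip x y) hs0.le
    calc _ ≤ _ := this
      _ = s * L * ‖x - y‖ := by ring
  have hfix := hcontr.fixedPoint_isFixedPt
  set y := hcontr.fixedPoint
  have hy : J (p - s • F y) = y := hfix
  refine ⟨y, g (p - s • F y), ?_, ?_⟩
  · have := hg (p - s • F y); rwa [hy] at this
  · have := hJg (p - s • F y); rw [hy] at this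
    rw [smul_add, add_left_comm, this]; abel

lemma aux_step_s9 {H : Type*} [NormedAddCommGroup H] [InnerProductSpace ℝ H]
    (L ρ s r η c t : ℝ) (A P B z zp u zs : H)
    (ht : 0 ≤ t) (hr : 1 < r) (hs : 0 < s) (hc : 2 * η * c = r * (r-1))
    (hz : (t+r) • zp = t • z + r • u - (s*(t+r)) • B - (2*ρ*t) • A)
    (hco : ρ * ‖P - A‖^2 ≤ ⟪P - A, zp - z⟫)
    (hco2 : ρ * ‖P‖^2 ≤ ⟪P, zp - zs⟫)
    (hl : ‖(t+r) • P - (t+r) • B‖^2 ≤ (s*L)^2 * ‖t • A - (t+r) • B‖^2) :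
    (r*(t+1)*⟪P, zp - (u - η • P)⟫ + (s/2*(t+1)^2+ρ*(t+1)*(t+1-r))*‖P‖^2
        + c * ‖(u - η • P) - zs‖^2)
      + ((t*((r-1)*(s+2*ρ) - η*r) + (s/2*(r^2-1) + ρ*(r-1) - η*r*r + r*(r-1)*ρ + (r-1)*η*r/2))*‖P‖^2
        + s/2*(1-(s*L)^2)*‖t • A - (t+r) • B‖^2)
      ≤ r*t*⟪A, z - u⟫ + (s/2*t^2+ρ*t*(t-r))*‖A‖^2 + c*‖u - zs‖^2 := by
  have eP := congrArg (fun x => ⟪x, P⟫) hz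
  have eA := congrArg (fun x => ⟪x, A⟫) hz
  simp only [← real_inner_self_eq_norm_sq] at *
  simp only [inner_sub_left, inner_sub_right, inner_add_left, inner_add_right, inner_smul_left,
    inner_smul_right, RCLike.conj_to_real] at *
  simp only [real_inner_comm P A, real_inner_comm B P, real_inner_comm B A, real_inner_comm P zp,
    real_inner_comm A zp, real_inner_comm P z, real_inner_comm A z, real_inner_comm P u,
    real_inner_comm A u, real_inner_comm P zs, real_inner_comm A zs, real_inner_comm zs u] at *
  have h1 := mul_le_mul_of_nonneg_left hco (show 0 ≤ t*(t+r) by positivity)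
  have h2 := mul_le_mul_of_nonneg_left hco2 (show 0 ≤ r*(r-1) by nlinarith)
  have h3 := mul_le_mul_of_nonneg_left hl (show 0 ≤ s/2 by positivity)
  linear_combination h1 + h2 + h3 + (t+r)*eP - t*eA + (η*⟪P,P⟫/2 - ⟪P,u⟫ + ⟪P,zs⟫)*hc

lemma aux_weak {H : Type*} [NormedAddCommGroup H] [InnerProductSpace ℝ H] [CompleteSpace H]
    (Sol : H → Prop) (z u A : ℕ → H) (C s ρ : ℝ) (hsρ : 0 < s + ρ)
    (hu : ∀ k, ‖u k‖ ≤ C)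
    (hd : Tendsto (fun k => z k - u k) atTop (nhds 0))
    (hA : Tendsto A atTop (nhds 0))
    (hdemi : ∀ p : H, ∃ y a : H, y + s • a = p ∧
      (∀ k, ρ * ‖A k - a‖^2 ≤ ⟪A k - a, z k - y⟫) ∧ (a = 0 → Sol y))
    (hlim : ∀ p q, Sol p → Sol q → ∃ l, Tendsto (fun k => ⟪u k, p - q⟫) atTop (nhds l)) :
    ∃ zinf : H, Sol zinf ∧
      (∀ y : H, Tendsto (fun k : ℕ => ⟪z k, y⟫) atTop (nhds ⟪zinf, y⟫)) ∧
      (∀ y : H, Tendsto (fun k : ℕ => ⟪u k, y⟫) atTop (nhds ⟪zinf, y⟫)) := by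
  have hzu : ∀ (f : Filter ℕ), f ≤ atTop → ∀ p y : H,
      Tendsto (fun k : ℕ => ⟪u k, y⟫) f (nhds ⟪p, y⟫) →
      Tendsto (fun k : ℕ => ⟪z k, y⟫) f (nhds ⟪p, y⟫) := by
    intro f hf p y h
    have h1 : Tendsto (fun k => ⟪z k - u k, y⟫) f (nhds ⟪(0:H), y⟫) :=
      (hd.mono_left hf).inner tendsto_const_nhds
    have := h1.add h
    simpa [inner_sub_left] using this
  -- cluster points
  have hcl : ∀ U : Ultrafilter ℕ, (U : Filter ℕ) ≤ atTop → ∃ p : H,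
      ∀ y : H, Tendsto (fun k : ℕ => ⟪u k, y⟫) U (nhds ⟪p, y⟫) := by
    intro U hU
    have hcpt := WeakDual.isCompact_closedBall (𝕜 := ℝ) (E := H) 0 C
    set φ : ℕ → WeakDual ℝ H := fun k => StrongDual.toWeakDual (InnerProductSpace.toDual ℝ H (u k)) with hφ
    obtain ⟨x, hx, hxl⟩ := hcpt.ultrafilter_le_nhds (U.map φ) (by
      simp only [Ultrafilter.coe_map, le_principal_iff, mem_map]
      refine Filter.univ_mem' (fun k => ?_)
      simp only [Set.mem_preimage, Metric.mem_closedBall, dist_zero_right]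
      simpa [hφ] using hu k)
    refine ⟨(InnerProductSpace.toDual ℝ H).symm (WeakDual.toStrongDual x), fun y => ?_⟩
    have h1 : Tendsto φ U (nhds x) := hxl
    have h2 := ((WeakDual.eval_continuous y).tendsto x).comp h1
    rw [InnerProductSpace.toDual_symm_apply]
    exact h2
  have hsolU : ∀ U : Ultrafilter ℕ, (U : Filter ℕ) ≤ atTop → ∀ p : H,
      (∀ y : H, Tendsto (fun k : ℕ => ⟪u k, y⟫) U (nhds ⟪p, y⟫)) → Sol p := by
    intro U hU p hp
    obtain ⟨y, a, hya, hk, hS⟩ := hdemi p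
    have hA' : Tendsto A U (nhds 0) := hA.mono_left hU
    have l1 : Tendsto (fun k => ρ * ‖A k - a‖^2) U (nhds (ρ * ‖(0:H) - a‖^2)) :=
      ((hA'.sub_const a).norm.pow 2).const_mul ρ
    have l2 : Tendsto (fun k => ⟪A k, z k - u k⟫) U (nhds ⟪(0:H), (0:H)⟫) :=
      hA'.inner (hd.mono_left hU)
    have l3 : Tendsto (fun k => ⟪A k, u k⟫) U (nhds 0) := by
      have h0 : Tendsto (fun k => ‖A k‖ * C) U (nhds 0) := by
        simpa using hA'.norm.mul_const C
      refine squeeze_zero_norm (fun k => ?_) h0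
      calc ‖⟪A k, u k⟫‖ ≤ ‖A k‖ * ‖u k‖ := norm_inner_le_norm _ _
        _ ≤ _ := by gcongr; exact hu k
    have l4 : Tendsto (fun k => ⟪A k, y⟫) U (nhds ⟪(0:H), y⟫) := hA'.inner tendsto_const_nhds
    have l5 := hzu U hU p a (hp a)
    have l6 : Tendsto (fun k => ⟪A k - a, z k - y⟫) U
        (nhds (⟪(0:H), (0:H)⟫ + 0 - ⟪(0:H), y⟫ - ⟪p, a⟫ + ⟪a, y⟫)) := by
      refine ((((l2.add l3).sub l4).sub l5).add_const ⟪a, y⟫).congr (fun k => ?_)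
      simp only [inner_sub_left, inner_sub_right]
      rw [real_inner_comm a (z k)]; ring
    have hle := le_of_tendsto_of_tendsto' l1 l6 hk
    have ha : (s + ρ) * ‖a‖^2 ≤ 0 := by
      simp only [inner_zero_left, zero_sub, norm_neg] at hle
      rw [← hya, inner_add_left, inner_smul_left, real_inner_self_eq_norm_sq, real_inner_comm a y] at hle
      simp only [RCLike.conj_to_real] at hle
      linarith
    have ha0 : a = 0 := by
      have : ‖a‖^2 ≤ 0 := by
        by_contra hc
        push Not at hc
        nlinarith
      have : ‖a‖ = 0 := by nlinarith [norm_nonneg a]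
      exact norm_eq_zero.1 this
    rw [ha0, smul_zero, add_zero] at hya
    rw [← hya]; exact hS ha0
  obtain ⟨p, hp⟩ := hcl (Ultrafilter.of atTop) (Ultrafilter.of_le _)
  have hSp := hsolU _ (Ultrafilter.of_le _) p hp
  have hmain : ∀ y : H, Tendsto (fun k : ℕ => ⟪u k, y⟫) atTop (nhds ⟪p, y⟫) := by
    intro y
    rw [tendsto_iff_ultrafilter]
    intro U hU
    obtain ⟨q, hq⟩ := hcl U hU
    have hSq := hsolU U hU q hq
    obtain ⟨l, hl⟩ := hlim p q hSp hSq
    have e1 := tendsto_nhds_unique (hp (p - q)) (hl.mono_left (Ultrafilter.of_le _))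
    have e2 := tendsto_nhds_unique (hq (p - q)) (hl.mono_left hU)
    have e3 : ⟪p - q, p - q⟫ = 0 := by rw [inner_sub_left, e1, e2, sub_self]
    have e4 : p = q := sub_eq_zero.1 (inner_self_eq_zero.1 e3)
    rw [e4]; exact hq y
  exact ⟨p, hSp, fun y => hzu atTop le_rfl p y (hmain y), hmain⟩

lemma aux_lower {H : Type*} [NormedAddCommGroup H] [InnerProductSpace ℝ H]
    (ρ s r c t : ℝ) (A z u w : H) (ht : 0 ≤ t) (hr : 1 < r) (hσ : 0 < s + 2*ρ)
    (hco : ρ * ‖A‖^2 ≤ ⟪A, z - w⟫) :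
    (c - r^2/(2*(s+2*ρ))) * ‖u - w‖^2 ≤
      r*t*⟪A, z - u⟫ + (s/2*t^2+ρ*t*(t-r))*‖A‖^2 + c*‖u - w‖^2 := by
  obtain ⟨β, hβ⟩ : ∃ β, β * (s + 2*ρ) = r := ⟨r/(s+2*ρ), by field_simp⟩
  have e : r^2/(2*(s+2*ρ)) = β * r / 2 := by
    rw [← hβ]; field_simp
  rw [e]
  have h1 : ⟪A, z - u⟫ = ⟪A, z - w⟫ - ⟪A, u - w⟫ := by rw [← inner_sub_right]; congr 1; abel
  rw [h1]
  have h2 : 0 ≤ ‖t • A - β • (u - w)‖^2 := by positivity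
  rw [norm_sub_sq_real, norm_smul, norm_smul, mul_pow, mul_pow, inner_smul_left, inner_smul_right] at h2
  simp only [Real.norm_eq_abs, sq_abs, RCLike.conj_to_real] at h2
  have h3 := mul_le_mul_of_nonneg_left hco (show 0 ≤ r*t by positivity)
  have h4 := mul_nonneg (show 0 ≤ (s+2*ρ)/2 by positivity) h2
  linear_combination h3 + h4 - (t * ⟪A, u - w⟫ - β/2*‖u-w‖^2) * hβ

lemma aux_conv_s9 {H : Type*} [NormedAddCommGroup H] [InnerProductSpace ℝ H]
    (t r : ℝ) (d dp e : H) (ht : 0 ≤ t) (hr : 0 < r) (h : (t+r) • dp = t • d + e) :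
    ‖dp‖^2 ≤ t/(t+r) * ‖d‖^2 + ‖e‖^2/(r*(t+r)) := by
  have h1 : (t+r)^2 * ‖dp‖^2 = t^2*‖d‖^2 + 2*t*⟪d, e⟫ + ‖e‖^2 := by
    have := congrArg (fun x => ‖x‖^2) h
    simp only [norm_add_sq_real (t • d) e] at this
    simp only [norm_smul, mul_pow, inner_smul_left] at this
    simp only [Real.norm_eq_abs, sq_abs, RCLike.conj_to_real] at this
    linarith
  have h2 : 2*r*⟪d,e⟫ ≤ r^2*‖d‖^2 + ‖e‖^2 := by
    have : 0 ≤ ‖r • d - e‖^2 := by positivity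
    simp only [norm_sub_sq_real, norm_smul, mul_pow, inner_smul_left] at this
    simp only [Real.norm_eq_abs, sq_abs, RCLike.conj_to_real] at this
    linarith
  have hm : 0 < t + r := by linarith
  have h3 : r*(t+r)^2*‖dp‖^2 ≤ (t+r)*(r*t*‖d‖^2+‖e‖^2) := by
    have := mul_le_mul_of_nonneg_left h2 ht
    linear_combination r * h1 + this
  have e1 : t/(t+r) * ‖d‖^2 + ‖e‖^2/(r*(t+r)) = ((t+r)*(r*t*‖d‖^2+‖e‖^2)) / (r*(t+r)^2) := by
    field_simp
  rw [e1, le_div_iff₀ (by positivity)]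
  linarith

lemma aux_e {H : Type*} [NormedAddCommGroup H] [InnerProductSpace ℝ H]
    (a b c : H) : ‖a + b + c‖^2 ≤ 3*(‖a‖^2+‖b‖^2+‖c‖^2) := by
  have h := norm_add₃_le (a := a) (b := b) (c := c)
  have : ‖a+b+c‖^2 ≤ (‖a‖+‖b‖+‖c‖)^2 := by gcongr
  nlinarith [sq_nonneg (‖a‖-‖b‖), sq_nonneg (‖a‖-‖c‖), sq_nonneg (‖b‖-‖c‖)]

set_option maxHeartbeats 2000000 in
/-- Weak convergence of the step-size-`s` SFBS method: both `(z_k)` and `(u_k)` converge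
weakly to the same zero of `T = F + G`. -/
theorem sfbs_weak_convergence
    {H : Type*} [NormedAddCommGroup H] [InnerProductSpace ℝ H] [CompleteSpace H]
    (L ρ s r D : ℝ) (F : H → H) (G : H → Set H)
    (z zh zt u Gt : ℕ → H)
    (hL : 0 < L) (hρ : -1/(2*L) < ρ)
    (hLip : ∀ x y : H, ‖F x - F y‖ ≤ L * ‖x - y‖)
    (hcomono : ∀ x y g h : H, g ∈ G x → h ∈ G y →
      ρ * ‖(F x + g) - (F y + h)‖^2 ≤ ⟪(F x + g) - (F y + h), x - y⟫)
    (hGmono : ∀ x y g h : H, g ∈ G x → h ∈ G y → 0 ≤ ⟪g - h, x - y⟫)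
    (hGmax : ∀ x w : H, (∀ y h : H, h ∈ G y → 0 ≤ ⟪w - h, x - y⟫) → w ∈ G x)
    (hsol : ∃ w : H, -F w ∈ G w)
    (hs0 : max 0 (-2*ρ) < s) (hs1 : s < 1/L)
    (hr : 1 < r) (hD0 : 0 < D) (hD : D < (r - 1) * (s + 2*ρ))
    (hu0 : u 0 = z 0) (hG0 : Gt 0 ∈ G (z 0))
    (hzt : ∀ k : ℕ, zt (k+1) = ((k : ℝ)/((k : ℝ) + r)) • z k + (r/((k : ℝ) + r)) • u k)
    (hzh : ∀ k : ℕ, zh k =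
      zt (k+1) - ((k : ℝ)/((k : ℝ) + r) * (s + 2*ρ)) • (F (z k) + Gt k))
    (hz : ∀ k : ℕ, z (k+1) = zt (k+1) - s • (F (zh k) + Gt (k+1))
        - ((2*ρ*(k : ℝ))/((k : ℝ) + r)) • (F (z k) + Gt k))
    (hGt : ∀ k : ℕ, Gt (k+1) ∈ G (z (k+1)))
    (hu : ∀ k : ℕ, u (k+1) = u k - (D/r) • (F (z (k+1)) + Gt (k+1))) :
    ∃ zinf : H, -F zinf ∈ G zinf ∧
      (∀ y : H, Tendsto (fun k : ℕ => ⟪z k, y⟫) atTop (nhds ⟪zinf, y⟫)) ∧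
      (∀ y : H, Tendsto (fun k : ℕ => ⟪u k, y⟫) atTop (nhds ⟪zinf, y⟫)) := by
  have hs : 0 < s := lt_of_le_of_lt (le_max_left _ _) hs0
  have hσ : 0 < s + 2*ρ := by have := lt_of_le_of_lt (le_max_right _ _) hs0; linarith
  have hsL : s * L < 1 := by rwa [lt_div_iff₀ hL] at hs1
  have hsL0 : 0 < s * L := by positivity
  have hμ : 0 < s/2*(1-(s*L)^2) := by
    have : (s*L)^2 < 1 := pow_lt_one₀ hsL0.le hsL two_ne_zero
    have : 0 < 1-(s*L)^2 := by linarith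
    positivity
  set μ := s/2*(1-(s*L)^2) with hμd
  have hr0 : 0 < r := by linarith
  have hr1 : 0 < r - 1 := by linarith
  set A : ℕ → H := fun k => F (z k) + Gt k with hA
  set B : ℕ → H := fun k => F (zh k) + Gt (k+1) with hB
  have hGk : ∀ k, Gt k ∈ G (z k) := by
    intro k; cases k with
    | zero => exact hG0
    | succ k => exact hGt k
  obtain ⟨η, hη⟩ : ∃ η, η = D/r := ⟨_, rfl⟩
  have hη0 : 0 < η := by rw [hη]; positivity
  have hηr : η * r = D := by rw [hη]; field_simp
  obtain ⟨c, hcd⟩ : ∃ c, c = r^2*(r-1)/(2*D) := ⟨_, rfl⟩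
  have hc : 2*η*c = r*(r-1) := by rw [hcd, hη]; field_simp
  have hc0 : 0 < c := by rw [hcd]; positivity
  set δ := (r-1)*(s+2*ρ) - D with hδd
  have hδ : 0 < δ := by rw [hδd]; linarith
  have hε : 0 < c - r^2/(2*(s+2*ρ)) := by
    have e : c - r^2/(2*(s+2*ρ)) = r^2 * δ/(2*D*(s+2*ρ)) := by
      rw [hcd, hδd]; field_simp
    rw [e]; positivity
  set ε := c - r^2/(2*(s+2*ρ)) with hεd
  set v : ℕ → H := fun k => (k:ℝ) • A k - ((k:ℝ)+r) • B k with hv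
  have hmpos : ∀ k : ℕ, 0 < (k:ℝ) + r := fun k => by positivity
  have hzm : ∀ k : ℕ, ((k:ℝ)+r) • z (k+1) = (k:ℝ) • z k + r • u k - (s*((k:ℝ)+r)) • B k
      - (2*ρ*(k:ℝ)) • A k := by
    intro k
    have := (hmpos k).ne'
    rw [hz k, hzt k]
    simp only [smul_sub, smul_add, smul_smul, hA, hB]
    field_simp
  have hzzh : ∀ k : ℕ, ((k:ℝ)+r) • (z (k+1) - zh k) = s • v k := by
    intro k
    have := (hmpos k).ne'
    have e1 : ((k:ℝ)+r) • zh k = ((k:ℝ)+r) • zt (k+1) - ((k:ℝ)*(s+2*ρ)) • A k := by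
      rw [hzh k, smul_sub, smul_smul]
      congr 2
      field_simp
    have e2 : ((k:ℝ)+r) • z (k+1) = ((k:ℝ)+r) • zt (k+1) - (s*((k:ℝ)+r)) • B k
      - (2*ρ*(k:ℝ)) • A k := by
      rw [hzm k, hzt k]
      simp only [smul_add, smul_smul]
      field_simp
    rw [smul_sub, e1, e2]
    simp only [hv]
    module
  have hl : ∀ k : ℕ, ‖((k:ℝ)+r) • A (k+1) - ((k:ℝ)+r) • B k‖ ≤ s*L*‖v k‖ := by
    intro k
    have h1 := hLip (z (k+1)) (zh k)
    have e1 : A (k+1) - B k = F (z (k+1)) - F (zh k) := by simp only [hA, hB]; abel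
    rw [← smul_sub, e1, norm_smul, Real.norm_of_nonneg (hmpos k).le]
    have h2 := congrArg norm (hzzh k)
    rw [norm_smul, norm_smul, Real.norm_of_nonneg (hmpos k).le, Real.norm_of_nonneg hs.le] at h2
    calc _ ≤ ((k:ℝ)+r) * (L * ‖z (k+1) - zh k‖) := by gcongr
      _ = L * (((k:ℝ)+r) * ‖z (k+1) - zh k‖) := by ring
      _ = _ := by rw [h2]; ring
  have hl2 : ∀ k : ℕ, ‖((k:ℝ)+r) • A (k+1) - ((k:ℝ)+r) • B k‖^2 ≤ (s*L)^2*‖v k‖^2 := by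
    intro k
    rw [← mul_pow]
    exact pow_le_pow_left₀ (norm_nonneg _) (hl k) 2
  have hco2 : ∀ w, -F w ∈ G w → ∀ k, ρ * ‖A k‖^2 ≤ ⟪A k, z k - w⟫ := by
    intro w hw k
    have := hcomono _ _ _ _ (hGk k) hw
    simpa using this
  set E : H → ℕ → ℝ := fun w k => r*(k:ℝ)*⟪A k, z k - u k⟫ +
    (s/2*(k:ℝ)^2+ρ*(k:ℝ)*((k:ℝ)-r))*‖A k‖^2 + c*‖u k - w‖^2 with hE
  have hElow : ∀ w, -F w ∈ G w → ∀ k, ε * ‖u k - w‖^2 ≤ E w k := by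
    intro w hw k
    exact aux_lower ρ s r c k (A k) (z k) (u k) w (Nat.cast_nonneg k) hr hσ (hco2 w hw k)
  set S : ℕ → ℝ := fun k => δ/2*((k:ℝ)+r)*‖A (k+1)‖^2 + μ*‖v k‖^2 with hS
  have hS0 : ∀ k, 0 ≤ S k := fun k => by have := hmpos k; positivity
  set c0 := s/2*(r^2-1) + ρ*(r-1) - D*r + r*(r-1)*ρ + (r-1)*η*r/2 with hc0d
  obtain ⟨N, hN⟩ := exists_nat_gt ((δ/2*r - c0)/(δ/2))
  rw [div_lt_iff₀ (by positivity)] at hN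
  have hstep : ∀ w, -F w ∈ G w → ∀ k, N ≤ k → E w (k+1) + S k ≤ E w k := by
    intro w hw k hk
    have h1 := aux_step_s9 L ρ s r η c k (A k) (A (k+1)) (B k) (z k) (z (k+1)) (u k) w
      (Nat.cast_nonneg k) hr hs hc (hzm k) (hcomono _ _ _ _ (hGk (k+1)) (hGk k))
      (hco2 w hw (k+1)) (hl2 k)
    have hu' : u (k+1) = u k - η • A (k+1) := by rw [hu k, hη]
    rw [← hu', hηr, ← hδd, ← hc0d, ← hμd] at h1
    have hkN : (N:ℝ) ≤ k := by exact_mod_cast hk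
    have h2 : 0 ≤ (k:ℝ)*δ + c0 - δ/2*((k:ℝ)+r) := by
      have := mul_le_mul_of_nonneg_right hkN (show 0 ≤ δ/2 by positivity)
      linarith only [this, hN]
    have h3 := mul_nonneg h2 (sq_nonneg ‖A (k+1)‖)
    simp only [hE, hS]
    push_cast
    linarith
  have hdesc := fun w (hw : -F w ∈ G w) => aux_desc (E w) S N
    (fun k => le_trans (by positivity) (hElow w hw k)) (fun k _ => hS0 k) (hstep w hw)
  obtain ⟨w0, hw0⟩ := hsol
  have hSs : Summable S := (hdesc w0 hw0).2
  -- boundedness of u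
  obtain ⟨C, hC⟩ : ∃ C, ∀ k, ‖u k‖ ≤ C := by
    obtain ⟨⟨l, hl⟩, -⟩ := hdesc w0 hw0
    obtain ⟨M, hM⟩ := hl.bddAbove_range
    refine ⟨M/ε + 1 + ‖w0‖, fun k => ?_⟩
    have h1 := (hElow w0 hw0 k).trans (hM ⟨k, rfl⟩)
    have h2 : ‖u k - w0‖^2 ≤ M/ε := by rw [le_div_iff₀ hε]; linarith
    have h3 : ‖u k‖ ≤ ‖u k - w0‖ + ‖w0‖ := by simpa using norm_add_le (u k - w0) w0
    linarith only [h2, h3, sq_nonneg (‖u k - w0‖ - 1), sq_nonneg ‖u k - w0‖]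
  -- A tends to zero
  have hAz : Tendsto A atTop (nhds 0) := by
    rw [← tendsto_add_atTop_iff_nat 1, tendsto_zero_iff_norm_tendsto_zero]
    have h1 : Tendsto (fun k => ‖A (k+1)‖^2) atTop (nhds 0) := by
      have h2 : Tendsto (fun k => 2/δ * S k) atTop (nhds 0) := by
        simpa using hSs.tendsto_atTop_zero.const_mul (2/δ)
      refine squeeze_zero (fun k => by positivity) (fun k => ?_) h2
      have hm1 : 1 ≤ (k:ℝ)+r := by have := Nat.cast_nonneg (α := ℝ) k; linarith
      have e : 2/δ * S k = ((k:ℝ)+r)*‖A (k+1)‖^2 + 2/δ*(μ*‖v k‖^2) := by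
        simp only [hS]; field_simp
      rw [e]
      have : 0 ≤ 2/δ*(μ*‖v k‖^2) := by positivity
      have h5 := mul_le_mul_of_nonneg_right hm1 (sq_nonneg ‖A (k+1)‖)
      linarith only [this, h5]
    have h3 := h1.sqrt
    simpa using h3
  -- z - u tends to zero
  have hd : Tendsto (fun k => z k - u k) atTop (nhds 0) := by
    rw [tendsto_zero_iff_norm_tendsto_zero]
    set K := 3*(4*ρ^2+(s+2*ρ)^2)/(r*μ) + 3*(η-(s+2*ρ))^2*2/(r*δ) with hK
    have hK0 : 0 ≤ K := by positivity
    have h1 := aux_zero_s9 (fun k => ‖z k - u k‖^2) (fun k => K * S k) r hr0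
      (fun k => by positivity) (fun k => mul_nonneg hK0 (hS0 k)) (hSs.mul_left K) (fun k => by
        set e := (-(2*ρ)) • v k + (s+2*ρ) • (((k:ℝ)+r) • A (k+1) - ((k:ℝ)+r) • B k)
          + ((η-(s+2*ρ))*((k:ℝ)+r)) • A (k+1) with he
        have h2 : ((k:ℝ)+r) • (z (k+1) - u (k+1)) = (k:ℝ) • (z k - u k) + e := by
          have hu' : u (k+1) = u k - η • A (k+1) := by rw [hu k, hη]
          rw [smul_sub, hzm k, hu', he]
          simp only [hv]
          module
        have h3 := aux_conv_s9 k r _ _ e (Nat.cast_nonneg k) hr0 h2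
        refine h3.trans (add_le_add le_rfl ?_)
        have hm := hmpos k
        have hm1 : 1 ≤ (k:ℝ)+r := by have := Nat.cast_nonneg (α := ℝ) k; linarith
        have h4 := aux_e ((-(2*ρ)) • v k) ((s+2*ρ) • (((k:ℝ)+r) • A (k+1) - ((k:ℝ)+r) • B k))
          (((η-(s+2*ρ))*((k:ℝ)+r)) • A (k+1))
        rw [← he] at h4
        simp only [norm_smul, mul_pow] at h4
        simp only [Real.norm_eq_abs, sq_abs] at h4
        have h5 : ‖((k:ℝ)+r) • A (k+1) - ((k:ℝ)+r) • B k‖^2 ≤ ‖v k‖^2 := by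
          refine pow_le_pow_left₀ (norm_nonneg _) ((hl k).trans ?_) 2
          exact mul_le_of_le_one_left (norm_nonneg _) hsL.le
        have h6 : ‖e‖^2 ≤ 3*(4*ρ^2+(s+2*ρ)^2)*‖v k‖^2
            + 3*(η-(s+2*ρ))^2*((k:ℝ)+r)^2*‖A (k+1)‖^2 := by
          have := mul_le_mul_of_nonneg_left h5 (sq_nonneg (s+2*ρ))
          rw [mul_pow] at h4
          linarith
        set m := (k:ℝ)+r with hmd
        calc ‖e‖^2/(r*m) ≤ (3*(4*ρ^2+(s+2*ρ)^2)*‖v k‖^2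
              + 3*(η-(s+2*ρ))^2*m^2*‖A (k+1)‖^2)/(r*m) := by gcongr
          _ = (3*(4*ρ^2+(s+2*ρ)^2)/(r*μ))*(μ*‖v k‖^2)/m
              + (3*(η-(s+2*ρ))^2*2/(r*δ))*(δ/2*m*‖A (k+1)‖^2) := by field_simp
          _ ≤ (3*(4*ρ^2+(s+2*ρ)^2)/(r*μ))*(μ*‖v k‖^2)
              + (3*(η-(s+2*ρ))^2*2/(r*δ))*(δ/2*m*‖A (k+1)‖^2) := by
                gcongr
                exact div_le_self (by positivity) hm1
          _ ≤ K * S k := by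
                have a1 : 0 ≤ 3*(4*ρ^2+(s+2*ρ)^2)/(r*μ) := by positivity
                have a2 : 0 ≤ 3*(η-(s+2*ρ))^2*2/(r*δ) := by positivity
                have a3 : 0 ≤ μ*‖v k‖^2 := by positivity
                have a4 : 0 ≤ δ/2*m*‖A (k+1)‖^2 := by positivity
                have a5 := mul_nonneg a1 a4
                have a6 := mul_nonneg a2 a3
                simp only [hS, hK]
                rw [← hmd]
                linarith)
    simpa using h1.sqrt
  refine aux_weak (fun w => -F w ∈ G w) z u A C s ρ (by linarith) hC hd hAz ?_ ?_
  · intro p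
    obtain ⟨y, h, hh, hy⟩ := aux_resolvent L s F G hL hLip hGmono hGmax hs hsL p
    refine ⟨y, F y + h, hy, fun k => hcomono _ _ _ _ (hGk k) hh, fun h0 => ?_⟩
    have : -F y = h := by rw [neg_eq_iff_add_eq_zero]; exact h0
    show -F y ∈ G y
    rw [this]; exact hh
  · intro p q hp hq
    obtain ⟨⟨a, ha⟩, -⟩ := hdesc p hp
    obtain ⟨⟨b, hb⟩, -⟩ := hdesc q hq
    refine ⟨((b - a)/c + (‖p‖^2 - ‖q‖^2))/2, ?_⟩
    refine ((((hb.sub ha).div_const c).add_const (‖p‖^2 - ‖q‖^2)).div_const 2).congr (fun k => ?_)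
    simp only [hE, norm_sub_sq_real, inner_sub_right]
    field_simp
    ring
end

section
/- Under the step-size-s SPEG+ iteration with F L-Lipschitz and monotone, 0 < s < 1/L, r > 1 and 0 < D < (r−1)s, the following hold: (i) lim_{k→∞} ‖z_k − u_k‖² = 0; (ii) for every solution z*, lim_{k→∞} ‖u_k − z*‖² exists; (iii) lim_{k→∞} k²·‖F(z_k) + C̃_k‖² = 0; (iv) for every solution z*, lim_{k→∞} k·⟨F(z_k) + C̃_k, z_k − z*⟩ = 0; (v) lim_{k→∞} k²·‖z_{k+1} − z_k‖² = 0. Moreover, (z_k) and (u_k) both converge weakly to a common solution. -/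
open RealInnerProductSpace Filter

theorem speg_qf (V x y : ℕ → ℝ) (m : ℝ) (hx : ∀ k, 0 ≤ x k) (hy0 : ∀ k, 0 ≤ y k)
    (hy : Summable y) (hm : ∀ k, m ≤ V k) (h : ∀ k, V (k+1) + x k ≤ V k + y k) :
    Summable x ∧ ∃ l, Tendsto V atTop (nhds l) := by
  have hS : ∀ n, ∑ i ∈ Finset.range n, y i ≤ ∑' i, y i :=
    fun n => hy.sum_le_tsum _ (fun i _ => hy0 i)
  constructor
  · apply summable_of_sum_range_le (c := V 0 + (∑' i, y i) - m) hx
    intro n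
    have : V n + ∑ i ∈ Finset.range n, x i ≤ V 0 + ∑ i ∈ Finset.range n, y i := by
      induction n with
      | zero => simp
      | succ n ih =>
        rw [Finset.sum_range_succ, Finset.sum_range_succ]
        linarith [h n]
    linarith [hS n, hm n]
  · have hanti : Antitone (fun n => V n - ∑ i ∈ Finset.range n, y i) := by
      apply antitone_nat_of_succ_le
      intro n
      rw [Finset.sum_range_succ]
      linarith [h n, hx n]
    have hb : BddBelow (Set.range (fun n => V n - ∑ i ∈ Finset.range n, y i)) := by
      refine ⟨m - ∑' i, y i, ?_⟩
      rintro _ ⟨n, rfl⟩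
      have := hS n
      have := hm n
      simp only
      linarith
    have h1 := tendsto_atTop_ciInf hanti hb
    have h2 := h1.add hy.hasSum.tendsto_sum_nat
    exact ⟨_, h2.congr (fun n => by ring)⟩

theorem speg_zero (A : ℕ → ℝ) (l : ℝ) (hA : ∀ k, 0 ≤ A k)
    (hl : Tendsto A atTop (nhds l)) (hs : Summable (fun k : ℕ => A k / ((k : ℝ) + 1))) : l = 0 := by
  by_contra hne
  have h0 : 0 ≤ l := ge_of_tendsto' hl hA
  have hpos : 0 < l := lt_of_le_of_ne h0 (Ne.symm hne)
  have hev : ∀ᶠ k in atTop, l / 2 < A k := hl.eventually (lt_mem_nhds (by linarith))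
  obtain ⟨N, hN⟩ := eventually_atTop.1 hev
  have h1 : Summable (fun k : ℕ => A (k + N) / (((k + N : ℕ) : ℝ) + 1)) :=
    (summable_nat_add_iff (f := fun k : ℕ => A k / ((k : ℝ) + 1)) N).2 hs
  have h2 : Summable (fun k : ℕ => (l/2) * (1 / (((k + N + 1 : ℕ) : ℝ)))) := by
    refine Summable.of_nonneg_of_le (fun k => by positivity) (fun k => ?_) h1
    have := hN (k + N) (by omega)
    rw [mul_one_div]
    push_cast
    gcongr
  have h3 : Summable (fun k : ℕ => 1 / (((k + (N + 1) : ℕ) : ℝ))) := by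
    have := h2.mul_left (2 / l)
    refine this.congr (fun k => ?_)
    field_simp
    push_cast
    ring
  have h4 := (summable_nat_add_iff (f := fun k : ℕ => 1 / (k : ℝ)) (N + 1)).1 h3
  exact Real.not_summable_one_div_natCast h4

theorem speg_step {H : Type*} [NormedAddCommGroup H] [InnerProductSpace ℝ H]
    (L s r K : ℝ) (p q h u A B Fh c c' : H) (hs : 0 < s) (hr : 1 < r) (hK : 0 ≤ K)
    (hLip : ‖B - Fh‖ ≤ L * ‖q - h‖)
    (hmono : 0 ≤ ⟪B - A, q - p⟫) (hc1 : ⟪c, h - p⟫ ≤ 0) (hc2 : ⟪c', p - q⟫ ≤ 0)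
    (hq : (K + r) • q = K • p + r • u - (s * (K + r)) • (Fh + c'))
    (hh : ⟪K • p + r • u - (K * s) • A - (K + r) • h, q - h⟫ ≤ 0) :
    r * (K + r) * ⟪B + c', q - u⟫ - r * K * ⟪A + c, p - u⟫
      + s / 2 * ((K + r)^2 * ‖B + c'‖^2 - K^2 * ‖A + c‖^2)
      + (1 - s^2 * L^2) / (2 * s) * ((K + r)^2 * ‖q - h‖^2) ≤ 0 := by
  have hKr : 0 < K + r := by linarith
  obtain ⟨W, hW⟩ : ∃ W, W = (K + r) • (Fh + c') := ⟨_, rfl⟩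
  obtain ⟨X, hX⟩ : ∃ X, X = (K + r) • (B + c') := ⟨_, rfl⟩
  obtain ⟨Y, hY⟩ : ∃ Y, Y = K • (A + c) := ⟨_, rfl⟩
  obtain ⟨e, he⟩ : ∃ e, e = (K + r) • (q - h) := ⟨_, rfl⟩
  obtain ⟨M, hM⟩ : ∃ M, M = K • p + r • u - (K * s) • A - (K + r) • h := ⟨_, rfl⟩
  have hq' : (K + r) • q = K • p + r • u - s • W := by
    rw [hq, hW, smul_smul]
  have f1 : K • (q - p) = r • (u - q) - s • W := by
    have : K • q + r • q = K • p + r • u - s • W := by rw [← add_smul, hq']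
    rw [smul_sub, smul_sub, eq_sub_of_add_eq this]; abel
  have f2 : (K + r) • (q - p) = r • (u - p) - s • W := by
    rw [smul_sub, hq', add_smul, smul_sub]; abel
  have f3 : e = s • (Y - W) + M - (s * K) • c := by
    rw [he, smul_sub, hq', hM, hY]; module
  have m1 : ⟪X, K • (q - p)⟫ - ⟪Y, (K + r) • (q - p)⟫
      = K * (K + r) * (⟪B - A, q - p⟫ - ⟪c', p - q⟫ - ⟪c, q - p⟫) := by
    have : p - q = -(q - p) := by abel
    rw [this, hX, hY]
    simp only [inner_smul_left, inner_smul_right, inner_add_left, inner_sub_left, inner_neg_right,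
      RCLike.conj_to_real]
    ring
  have m2 : -(K * (K + r) * ⟪c, q - p⟫) ≤ ⟪X, K • (q - p)⟫ - ⟪Y, (K + r) • (q - p)⟫ := by
    rw [m1]
    have := mul_nonneg (mul_nonneg hK hKr.le) hmono
    have := mul_nonneg (mul_nonneg hK hKr.le) (neg_nonneg.2 hc2)
    linarith
  have m3 : ⟪X, K • (q - p)⟫ - ⟪Y, (K + r) • (q - p)⟫
      = - (r * ⟪X, q - u⟫) + r * ⟪Y, p - u⟫ - s * ⟪X - Y, W⟫ := by
    rw [f1, f2]
    simp only [inner_smul_right, inner_sub_left, inner_sub_right]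
    ring
  have n1 : ‖e‖^2 = ⟪e, s • (Y - W)⟫ + ⟪M, e⟫ - s * K * ⟪c, e⟫ := by
    have e1 : ⟪e, e⟫ = ⟪e, s • (Y - W) + M - (s * K) • c⟫ := by rw [← f3]
    rw [← real_inner_self_eq_norm_sq, e1, inner_sub_right, inner_add_right, inner_smul_right (r := s * K), real_inner_comm e M, real_inner_comm e c]
  have n2 : ⟪M, e⟫ ≤ 0 := by
    rw [he, inner_smul_right, hM]
    exact mul_nonpos_of_nonneg_of_nonpos hKr.le hh
  have n3 : - (s * K * ⟪c, e⟫) ≤ - (s * (K * (K + r) * ⟪c, q - p⟫)) := by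
    have e1 : ⟪c, e⟫ = (K + r) * (⟪c, q - p⟫ - ⟪c, h - p⟫) := by
      rw [he, inner_smul_right, ← inner_sub_right]; congr 2; abel
    rw [e1]
    have := mul_nonneg (mul_nonneg hs.le (mul_nonneg hK hKr.le)) (neg_nonneg.2 hc1)
    linarith
  have n4 : 0 ≤ ‖e‖^2 - 2 * ⟪e, s • (Y - W)⟫ + s^2 * ‖W - Y‖^2 := by
    have := norm_sub_sq_real e (s • (Y - W))
    rw [norm_smul, mul_pow, Real.norm_eq_abs, sq_abs, norm_sub_rev Y W] at this
    rw [← this]; positivity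
  have l1 : ‖X - W‖^2 ≤ L^2 * ‖e‖^2 := by
    have e1 : X - W = (K + r) • (B - Fh) := by rw [hX, hW]; module
    have : ‖X - W‖ ≤ L * ‖e‖ := by
      rw [e1, he, norm_smul, norm_smul, Real.norm_eq_abs, abs_of_pos hKr]
      nlinarith
    rw [← mul_pow]
    gcongr
  have l2 : 2 * ⟪X - Y, W⟫ = ‖X‖^2 - ‖Y‖^2 - ‖X - W‖^2 + ‖W - Y‖^2 := by
    rw [norm_sub_sq_real, norm_sub_sq_real, inner_sub_left, real_inner_comm Y W]; ring
  have gX : ‖X‖^2 = (K + r)^2 * ‖B + c'‖^2 := by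
    rw [hX, norm_smul, mul_pow, Real.norm_eq_abs, sq_abs]
  have gY : ‖Y‖^2 = K^2 * ‖A + c‖^2 := by
    rw [hY, norm_smul, mul_pow, Real.norm_eq_abs, sq_abs]
  have ge : ‖e‖^2 = (K + r)^2 * ‖q - h‖^2 := by
    rw [he, norm_smul, mul_pow, Real.norm_eq_abs, sq_abs]
  have iX : ⟪X, q - u⟫ = (K + r) * ⟪B + c', q - u⟫ := by
    rw [hX, inner_smul_left]; rfl
  have iY : ⟪Y, p - u⟫ = K * ⟪A + c, p - u⟫ := by
    rw [hY, inner_smul_left]; rfl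
  rw [← gX, ← gY, ← ge]
  have hfin : r * ⟪X, q - u⟫ - r * ⟪Y, p - u⟫ + s / 2 * (‖X‖^2 - ‖Y‖^2)
      + (1 - s^2 * L^2) / (2 * s) * ‖e‖^2 ≤ 0 := by
    have hkey : ‖e‖^2 ≤ s^2 * ‖W - Y‖^2 - 2 * (s * (K * (K + r) * ⟪c, q - p⟫)) := by linarith
    have hdiv : ‖e‖^2 / (2 * s) ≤ s / 2 * ‖W - Y‖^2 - K * (K + r) * ⟪c, q - p⟫ := by
      rw [div_le_iff₀ (by positivity)]
      linarith
    have e2 : (1 - s^2 * L^2) / (2 * s) * ‖e‖^2 = ‖e‖^2 / (2 * s) - s / 2 * (L^2 * ‖e‖^2) := by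
      field_simp
    rw [e2]
    have := mul_le_mul_of_nonneg_left l1 (by positivity : 0 ≤ s / 2)
    have l3 : s * ⟪X - Y, W⟫ = s / 2 * (‖X‖^2 - ‖Y‖^2 - ‖X - W‖^2 + ‖W - Y‖^2) := by
      rw [← l2]; ring
    linarith
  rw [iX, iY] at hfin
  linarith

theorem speg_ultra {H : Type*} [NormedAddCommGroup H] [InnerProductSpace ℝ H] [CompleteSpace H]
    (u : ℕ → H) (R : ℝ) (hR : ∀ k, ‖u k‖ ≤ R) (U : Ultrafilter ℕ) :
    ∃ w : H, ∀ y : H, Tendsto (fun k => ⟪u k, y⟫) U (nhds ⟪w, y⟫) := by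
  let f : ℕ → WeakDual ℝ H := fun k => StrongDual.toWeakDual (InnerProductSpace.toDual ℝ H (u k))
  have hc := WeakDual.isCompact_closedBall (𝕜 := ℝ) (E := H) 0 R
  have hmem : ∀ k, f k ∈ WeakDual.toStrongDual ⁻¹' Metric.closedBall (0 : StrongDual ℝ H) R := by
    intro k
    show InnerProductSpace.toDual ℝ H (u k) ∈ Metric.closedBall (0 : StrongDual ℝ H) R
    rw [mem_closedBall_zero_iff, LinearIsometryEquiv.norm_map]
    exact hR k
  obtain ⟨φ, -, hφ⟩ := hc.ultrafilter_le_nhds (U.map f) (by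
    rw [le_principal_iff]
    exact Filter.univ_mem' (f := (U : Filter ℕ)) hmem)
  refine ⟨(InnerProductSpace.toDual ℝ H).symm (WeakDual.toStrongDual φ), fun y => ?_⟩
  have h1 : Tendsto f U (nhds φ) := hφ
  have h2 := ((WeakDual.eval_continuous (𝕜 := ℝ) y).tendsto φ).comp h1
  rw [InnerProductSpace.toDual_symm_apply]
  exact h2

theorem speg_weak {H : Type*} [NormedAddCommGroup H] [InnerProductSpace ℝ H] [CompleteSpace H]
    (F : H → H) (C : Set H) (z u G : ℕ → H) (L : ℝ)
    (hLip : ∀ x y : H, ‖F x - F y‖ ≤ L * ‖x - y‖)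
    (hmono : ∀ x y : H, 0 ≤ ⟪F x - F y, x - y⟫)
    (hCne : C.Nonempty) (hCclosed : IsClosed C) (hCconv : Convex ℝ C)
    (hsol : ∃ w : H, w ∈ C ∧ ∀ v ∈ C, 0 ≤ ⟪F w, v - w⟫)
    (hz : ∀ k, z k ∈ C)
    (hzu : Tendsto (fun k => ‖z k - u k‖) atTop (nhds 0))
    (hG : Tendsto (fun k => ‖G k‖) atTop (nhds 0))
    (hGz : ∀ k, ∀ v ∈ C, ⟪G k - F (z k), v - z k⟫ ≤ 0)
    (hlim : ∀ zs : H, zs ∈ C → (∀ v ∈ C, 0 ≤ ⟪F zs, v - zs⟫) →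
      ∃ l : ℝ, Tendsto (fun k : ℕ => ‖u k - zs‖^2) atTop (nhds l)) :
    (∃ w : H, (w ∈ C ∧ ∀ v ∈ C, 0 ≤ ⟪F w, v - w⟫) ∧
      (∀ y : H, Tendsto (fun k : ℕ => ⟪z k, y⟫) atTop (nhds ⟪w, y⟫)) ∧
      (∀ y : H, Tendsto (fun k : ℕ => ⟪u k, y⟫) atTop (nhds ⟪w, y⟫))) := by
  have hFc : Continuous F := by
    have : LipschitzWith (Real.toNNReal L) F := by
      apply LipschitzWith.of_dist_le_mul
      intro x y
      rw [dist_eq_norm, dist_eq_norm]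
      refine (hLip x y).trans ?_
      gcongr
      exact Real.le_coe_toNNReal L
    exact this.continuous
  -- boundedness
  obtain ⟨ws, hwsC, hws⟩ := hsol
  obtain ⟨l0, hl0⟩ := hlim ws hwsC hws
  obtain ⟨R, hR⟩ : ∃ R, ∀ k, ‖u k‖ ≤ R := by
    obtain ⟨M, hM⟩ := hl0.bddAbove_range
    refine ⟨1 + M + ‖ws‖, fun k => ?_⟩
    have h1 : ‖u k - ws‖^2 ≤ M := hM ⟨k, rfl⟩
    have h2 : ‖u k‖ ≤ ‖u k - ws‖ + ‖ws‖ := by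
      simpa using norm_add_le (u k - ws) ws
    nlinarith [sq_nonneg (‖u k - ws‖ - 1)]
  obtain ⟨Rz, hRz⟩ : ∃ R, ∀ k, ‖z k‖ ≤ R := by
    obtain ⟨M, hM⟩ := hzu.bddAbove_range
    refine ⟨M + R, fun k => ?_⟩
    have h1 : ‖z k - u k‖ ≤ M := hM ⟨k, rfl⟩
    have h2 : ‖z k‖ ≤ ‖z k - u k‖ + ‖u k‖ := by
      simpa using norm_add_le (z k - u k) (u k)
    linarith [hR k]
  have hdiff : ∀ y : H, Tendsto (fun k => ⟪z k - u k, y⟫) atTop (nhds 0) := by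
    intro y
    refine squeeze_zero_norm (fun k => norm_inner_le_norm _ _) ?_
    simpa using hzu.mul_const ‖y‖
  -- limits along ultrafilters are solutions
  have hult : ∀ U : Ultrafilter ℕ, (U : Filter ℕ) ≤ atTop → ∃ w : H,
      (w ∈ C ∧ ∀ v ∈ C, 0 ≤ ⟪F w, v - w⟫) ∧
      ∀ y : H, Tendsto (fun k => ⟪u k, y⟫) U (nhds ⟪w, y⟫) := by
    intro U hU
    obtain ⟨w, hw⟩ := speg_ultra u R hR U
    have hwz : ∀ y : H, Tendsto (fun k => ⟪z k, y⟫) U (nhds ⟪w, y⟫) := by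
      intro y
      have := ((hdiff y).mono_left hU).add (hw y)
      rw [zero_add] at this
      refine this.congr (fun k => ?_)
      rw [← inner_add_left, sub_add_cancel]
    have hwC : w ∈ C := by
      obtain ⟨p, hpC, hp⟩ := exists_norm_eq_iInf_of_complete_convex hCne hCclosed.isComplete hCconv w
      have hp' := (norm_eq_iInf_iff_real_inner_le_zero hCconv hpC).1 hp
      have h1 : Tendsto (fun k => ⟪w - p, z k - p⟫) U (nhds ⟪w - p, w - p⟫) := by
        have := (hwz (w - p)).sub_const ⟪p, w - p⟫
        rw [← inner_sub_left] at this
        refine this.congr (fun k => ?_)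
        rw [← inner_sub_left, real_inner_comm]
      have h2 : ⟪w - p, w - p⟫ ≤ 0 := le_of_tendsto' h1 (fun k => hp' _ (hz k))
      have h3 : w - p = 0 := inner_self_eq_zero.1 (le_antisymm h2 real_inner_self_nonneg)
      rw [sub_eq_zero.1 h3]; exact hpC
    have hminty : ∀ v ∈ C, 0 ≤ ⟪F v, v - w⟫ := by
      intro v hv
      have h1 : Tendsto (fun k => ⟪F v, v - z k⟫ - ⟪G k, v - z k⟫) U (nhds (⟪F v, v - w⟫ - 0)) := by
        refine Tendsto.sub ?_ ?_
        · have := (hwz (F v)).const_sub ⟪v, F v⟫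
          rw [← inner_sub_left, real_inner_comm (F v) (v - w)] at this
          refine this.congr (fun k => ?_)
          rw [← inner_sub_left, real_inner_comm]
        · have h0 : Tendsto (fun k => ‖G k‖ * (‖v‖ + Rz)) U (nhds 0) := by
            simpa using (hG.mono_left hU).mul_const (‖v‖ + Rz)
          refine squeeze_zero_norm (fun k => (norm_inner_le_norm _ _).trans ?_) h0
          gcongr
          exact (norm_sub_le _ _).trans (by linarith [hRz k])
      rw [sub_zero] at h1
      refine ge_of_tendsto' h1 (fun k => ?_)
      have a1 := hmono v (z k)
      have a2 := hGz k v hv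
      rw [inner_sub_left] at a1 a2
      linarith
    refine ⟨w, ⟨hwC, fun v hv => ?_⟩, hw⟩
    have hseg : ∀ t : ℝ, 0 < t → t ≤ 1 → 0 ≤ ⟪F (w + t • (v - w)), v - w⟫ := by
      intro t ht ht1
      have hm : w + t • (v - w) ∈ C := hCconv.add_smul_sub_mem hwC hv ⟨ht.le, ht1⟩
      have := hminty _ hm
      rw [add_sub_cancel_left, inner_smul_right] at this
      exact nonneg_of_mul_nonneg_right this ht
    have hct : Tendsto (fun t : ℝ => ⟪F (w + t • (v - w)), v - w⟫) (nhdsWithin 0 (Set.Ioi 0))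
        (nhds ⟪F w, v - w⟫) := by
      have hcont : Continuous (fun t : ℝ => ⟪F (w + t • (v - w)), v - w⟫) := by fun_prop
      have := hcont.tendsto 0
      simp only [zero_smul, add_zero] at this
      exact this.mono_left nhdsWithin_le_nhds
    refine ge_of_tendsto hct ?_
    filter_upwards [Ioc_mem_nhdsGT (show (0:ℝ) < 1 by norm_num)] with t ht
    exact hseg t ht.1 ht.2
  obtain ⟨w, hwS, hw⟩ := hult (Ultrafilter.of atTop) (Ultrafilter.of_le _)
  have huw : ∀ y : H, Tendsto (fun k : ℕ => ⟪u k, y⟫) atTop (nhds ⟪w, y⟫) := by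
    intro y
    rw [tendsto_iff_ultrafilter]
    intro U hU
    obtain ⟨w', hwS', hw'⟩ := hult U hU
    have heq : w' = w := by
      obtain ⟨l, hl⟩ := hlim w hwS.1 hwS.2
      obtain ⟨l', hl'⟩ := hlim w' hwS'.1 hwS'.2
      have h1 : Tendsto (fun k => ⟪u k, w' - w⟫) atTop
          (nhds ((l - l' - ‖w‖^2 + ‖w'‖^2) / 2)) := by
        refine ((((hl.sub hl').sub_const (‖w‖^2)).add_const (‖w'‖^2)).div_const 2).congr (fun k => ?_)
        rw [norm_sub_sq_real, norm_sub_sq_real, inner_sub_right]; ring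
      have e1 := tendsto_nhds_unique (h1.mono_left (Ultrafilter.of_le atTop)) (hw (w' - w))
      have e2 := tendsto_nhds_unique (h1.mono_left hU) (hw' (w' - w))
      have e3 : ⟪w' - w, w' - w⟫ = 0 := by rw [inner_sub_left, ← e1, ← e2, sub_self]
      exact sub_eq_zero.1 (inner_self_eq_zero.1 e3)
    rw [← heq]
    exact hw' y
  refine ⟨w, hwS, fun y => ?_, huw⟩
  have := (hdiff y).add (huw y)
  rw [zero_add] at this
  refine this.congr (fun k => ?_)
  rw [← inner_add_left, sub_add_cancel]

set_option maxHeartbeats 4000000 in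
/-- Faster `o(1/k²)` rate and weak convergence for the step-size-`s` SPEG+ method. -/
theorem speg_faster_rate_and_weak_convergence
    {H : Type*} [NormedAddCommGroup H] [InnerProductSpace ℝ H] [CompleteSpace H]
    (L s r D : ℝ) (F : H → H) (C : Set H)
    (z zh zt u Ct : ℕ → H)
    (hL : 0 < L)
    (hLip : ∀ x y : H, ‖F x - F y‖ ≤ L * ‖x - y‖)
    (hmono : ∀ x y : H, 0 ≤ ⟪F x - F y, x - y⟫)
    (hCne : C.Nonempty) (hCclosed : IsClosed C) (hCconv : Convex ℝ C)
    (hs0 : 0 < s) (hs1 : s < 1/L)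
    (hr : 1 < r) (hD0 : 0 < D) (hD : D < (r - 1) * s)
    (hsol : ∃ w : H, w ∈ C ∧ ∀ v ∈ C, 0 ≤ ⟪F w, v - w⟫)
    (hz0 : z 0 ∈ C) (hu0 : u 0 = z 0) (hC0 : Ct 0 = 0)
    (hzt : ∀ k : ℕ, zt (k+1) = ((k : ℝ)/((k : ℝ) + r)) • z k + (r/((k : ℝ) + r)) • u k)
    (hzhC : ∀ k : ℕ, zh k ∈ C)
    (hzhproj : ∀ k : ℕ, ∀ w ∈ C,
      ⟪zt (k+1) - (((k : ℝ)*s)/((k : ℝ) + r)) • F (z k) - zh k, w - zh k⟫ ≤ 0)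
    (hzC : ∀ k : ℕ, z (k+1) ∈ C)
    (hzproj : ∀ k : ℕ, ∀ w ∈ C,
      ⟪zt (k+1) - s • F (zh k) - z (k+1), w - z (k+1)⟫ ≤ 0)
    (hCt : ∀ k : ℕ, Ct (k+1) = s⁻¹ • (zt (k+1) - s • F (zh k) - z (k+1)))
    (hu : ∀ k : ℕ, u (k+1) = u k - (D/r) • (F (z (k+1)) + Ct (k+1))) :
    Tendsto (fun k : ℕ => ‖z k - u k‖^2) atTop (nhds 0) ∧
    (∀ zs : H, zs ∈ C → (∀ v ∈ C, 0 ≤ ⟪F zs, v - zs⟫) →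
      ∃ l : ℝ, Tendsto (fun k : ℕ => ‖u k - zs‖^2) atTop (nhds l)) ∧
    Tendsto (fun k : ℕ => (k : ℝ)^2 * ‖F (z k) + Ct k‖^2) atTop (nhds 0) ∧
    (∀ zs : H, zs ∈ C → (∀ v ∈ C, 0 ≤ ⟪F zs, v - zs⟫) →
      Tendsto (fun k : ℕ => (k : ℝ) * ⟪F (z k) + Ct k, z k - zs⟫) atTop (nhds 0)) ∧
    Tendsto (fun k : ℕ => (k : ℝ)^2 * ‖z (k+1) - z k‖^2) atTop (nhds 0) ∧
    (∃ w : H, (w ∈ C ∧ ∀ v ∈ C, 0 ≤ ⟪F w, v - w⟫) ∧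
      (∀ y : H, Tendsto (fun k : ℕ => ⟪z k, y⟫) atTop (nhds ⟪w, y⟫)) ∧
      (∀ y : H, Tendsto (fun k : ℕ => ⟪u k, y⟫) atTop (nhds ⟪w, y⟫))) := by
  have hr0 : 0 < r := by linarith
  have hr1 : 0 < r - 1 := by linarith
  have hsL : s * L < 1 := by rwa [lt_div_iff₀ hL] at hs1
  have hδ : 0 < (1 - s^2 * L^2) / (2 * s) := by
    have h1 : 0 < s * L := by positivity
    have : 0 < 1 - s^2 * L^2 := by nlinarith
    positivity
  have hzC' : ∀ k, z k ∈ C := by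
    intro k
    cases k with
    | zero => exact hz0
    | succ k => exact hzC k
  have hN : ∀ k, ∀ v ∈ C, ⟪Ct k, v - z k⟫ ≤ 0 := by
    intro k v hv
    cases k with
    | zero => rw [hC0, inner_zero_left]
    | succ k =>
      rw [hCt, inner_smul_left]
      exact mul_nonpos_of_nonneg_of_nonpos (by simpa using hs0.le) (hzproj k v hv)
  have hKr : ∀ k : ℕ, 0 < (k : ℝ) + r := fun k => by positivity
  have hztK : ∀ k : ℕ, ((k : ℝ) + r) • zt (k+1) = (k : ℝ) • z k + r • u k := by
    intro k
    have := (hKr k).ne'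
    rw [hzt, smul_add, smul_smul, smul_smul, mul_div_cancel₀ _ this, mul_div_cancel₀ _ this]
  have hq : ∀ k : ℕ, ((k : ℝ) + r) • z (k+1) =
      (k : ℝ) • z k + r • u k - (s * ((k : ℝ) + r)) • (F (zh k) + Ct (k+1)) := by
    intro k
    have h1 : s • Ct (k+1) = zt (k+1) - s • F (zh k) - z (k+1) := by
      rw [hCt, smul_smul, mul_inv_cancel₀ hs0.ne', one_smul]
    have h2 : z (k+1) = zt (k+1) - s • F (zh k) - s • Ct (k+1) := by rw [h1]; abel
    rw [← hztK, h2]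
    module
  obtain ⟨G, hG⟩ : ∃ G : ℕ → H, ∀ k, G k = F (z k) + Ct k := ⟨_, fun _ => rfl⟩
  obtain ⟨g, hg⟩ : ∃ g : ℕ → ℝ, ∀ k, g k = ‖G k‖^2 := ⟨_, fun _ => rfl⟩
  obtain ⟨a, ha⟩ : ∃ a : ℕ → ℝ, ∀ k, a k = ⟪G k, z k - u k⟫ := ⟨_, fun _ => rfl⟩
  obtain ⟨e, he⟩ : ∃ e : ℕ → ℝ, ∀ k : ℕ, e k = ((k : ℝ) + r)^2 * ‖z (k+1) - zh k‖^2 :=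
    ⟨_, fun _ => rfl⟩
  obtain ⟨vv, hvv⟩ : ∃ vv : ℕ → ℝ, ∀ k, vv k = ‖z k - u k‖^2 := ⟨_, fun _ => rfl⟩
  obtain ⟨δ, hδd⟩ : ∃ δ : ℝ, δ = (1 - s^2 * L^2) / (2 * s) := ⟨_, rfl⟩
  rw [← hδd] at hδ
  have hg0 : ∀ k, 0 ≤ g k := fun k => by rw [hg]; positivity
  have he0 : ∀ k, 0 ≤ e k := fun k => by rw [he]; positivity
  have hvv0 : ∀ k, 0 ≤ vv k := fun k => by rw [hvv]; positivity
  have hu' : ∀ k, u k = u (k+1) + (D/r) • G (k+1) := by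
    intro k
    rw [hu, hG]; abel
  have hstar : ∀ k : ℕ, r * ((k : ℝ) + r) * a (k+1) - D * ((k : ℝ) + r) * g (k+1) - r * k * a k
      + s / 2 * (((k : ℝ) + r)^2 * g (k+1) - (k : ℝ)^2 * g k) + δ * e k ≤ 0 := by
    intro k
    have h1 := speg_step L s r k (z k) (z (k+1)) (zh k) (u k) (F (z k)) (F (z (k+1))) (F (zh k))
      (Ct k) (Ct (k+1)) hs0 hr (Nat.cast_nonneg k) (hLip _ _) (hmono _ _)
      (hN k _ (hzhC k)) (hN (k+1) _ (hzC' k)) (hq k) (by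
        have h2 := hzhproj k (z (k+1)) (hzC k)
        have h3 : (k : ℝ) • z k + r • u k - ((k : ℝ) * s) • F (z k) - ((k : ℝ) + r) • zh k
            = ((k : ℝ) + r) • (zt (k+1) - (((k : ℝ)*s)/((k : ℝ) + r)) • F (z k) - zh k) := by
          rw [smul_sub, smul_sub, hztK, smul_smul, mul_div_cancel₀ _ (hKr k).ne']
        rw [h3, inner_smul_left]
        exact mul_nonpos_of_nonneg_of_nonpos (by simpa using (hKr k).le) h2)
    rw [← hG, ← hG, ← hg, ← hg, ← ha, ← he, ← hδd] at h1
    have h2 : ⟪G (k+1), z (k+1) - u k⟫ = a (k+1) - D / r * g (k+1) := by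
      rw [ha, hg, hu' k, ← sub_sub, inner_sub_right (G (k+1)) (z (k+1) - u (k+1)), inner_smul_right,
        real_inner_self_eq_norm_sq]
    rw [h2] at h1
    have h3 : r * ((k : ℝ) + r) * (a (k+1) - D / r * g (k+1))
        = r * ((k : ℝ) + r) * a (k+1) - D * ((k : ℝ) + r) * g (k+1) := by
      field_simp
    linarith
  -- energy
  have henergy : ∀ zs : H, zs ∈ C → (∀ v ∈ C, 0 ≤ ⟪F zs, v - zs⟫) →
      (∃ l, Tendsto (fun k : ℕ => r * k * a k + s / 2 * ((k : ℝ)^2 * g k)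
        + r^2 * (r - 1) / (2 * D) * ‖u k - zs‖^2) atTop (nhds l)) ∧
      Summable (fun k : ℕ => δ * e k + (s * (r - 1) - D) * ((k : ℝ) + (r + 1) / 2) * g (k+1)) ∧
      ∃ M, ∀ k : ℕ, (k : ℝ)^2 * g k ≤ M := by
    intro zs hzs hzs'
    have hb : ∀ k, 0 ≤ ⟪G k, z k - zs⟫ := by
      intro k
      have h1 := hmono (z k) zs
      have h2 := hN k zs hzs
      have h3 := hzs' (z k) (hzC' k)
      have h4 : zs - z k = -(z k - zs) := by abel
      rw [h4, inner_neg_right] at h2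
      rw [inner_sub_left] at h1
      rw [hG, inner_add_left]
      linarith
    obtain ⟨b, hbd⟩ : ∃ b : ℕ → ℝ, ∀ k, b k = ⟪G k, z k - zs⟫ := ⟨_, fun _ => rfl⟩
    obtain ⟨E, hE⟩ : ∃ E : ℕ → ℝ, ∀ k : ℕ, E k = r * k * a k + s / 2 * ((k : ℝ)^2 * g k)
        + r^2 * (r - 1) / (2 * D) * ‖u k - zs‖^2 := ⟨_, fun _ => rfl⟩
    have hiu : ∀ k, ⟪G k, u k - zs⟫ = b k - a k := by
      intro k
      rw [hbd, ha, ← inner_sub_right]; congr 1; abel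
    have hun : ∀ k, ‖u k - zs‖^2 = ‖u (k+1) - zs‖^2 + 2 * (D / r) * (b (k+1) - a (k+1))
        + (D / r)^2 * g (k+1) := by
      intro k
      have h1 : u k - zs = (u (k+1) - zs) + (D / r) • G (k+1) := by rw [hu' k]; abel
      rw [h1, norm_add_sq_real, inner_smul_right, real_inner_comm, hiu, norm_smul, mul_pow,
        Real.norm_eq_abs, sq_abs, hg]
      ring
    have hstep : ∀ k : ℕ, E (k+1) + (δ * e k + (s * (r - 1) - D) * ((k : ℝ) + (r + 1) / 2) * g (k+1)
        + r * (r - 1) * b (k+1)) ≤ E k + 0 := by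
      intro k
      have h1 := hstar k
      rw [hE, hE, hun k]
      have h2 : r^2 * (r - 1) / (2 * D) * (‖u (k+1) - zs‖^2 + 2 * (D / r) * (b (k+1) - a (k+1))
        + (D / r)^2 * g (k+1)) = r^2 * (r - 1) / (2 * D) * ‖u (k+1) - zs‖^2
          + r * (r - 1) * (b (k+1) - a (k+1)) + (r - 1) * D / 2 * g (k+1) := by
        field_simp
      rw [h2]
      push_cast
      linarith
    obtain ⟨σ, hσ⟩ : ∃ σ : ℝ, σ = D / (r - 1) := ⟨_, rfl⟩
    have hσ0 : 0 < σ := by rw [hσ]; positivity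
    have hσs : σ < s := by rw [hσ, div_lt_iff₀ hr1]; linarith
    have hlow : ∀ k : ℕ, (s - σ) / 2 * ((k : ℝ)^2 * g k) ≤ E k := by
      intro k
      have h1 : 0 ≤ ‖(σ * k) • G k - r • (u k - zs)‖^2 := by positivity
      rw [norm_sub_sq_real, inner_smul_left, inner_smul_right, hiu, norm_smul, norm_smul, mul_pow,
        mul_pow, Real.norm_eq_abs, Real.norm_eq_abs, sq_abs, sq_abs, ← hg] at h1
      simp only [RCLike.conj_to_real] at h1
      have h2 : r^2 * (r - 1) / (2 * D) = r^2 / (2 * σ) := by rw [hσ]; field_simp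
      have h3 : 0 ≤ σ / 2 * ((k : ℝ)^2 * g k) - r * k * (b k - a k)
          + r^2 / (2 * σ) * ‖u k - zs‖^2 := by
        have h4 := mul_nonneg (by positivity : 0 ≤ 1 / (2 * σ)) h1
        have h5 : 1 / (2 * σ) * ((σ * k)^2 * g k - 2 * (σ * k * (r * (b k - a k)))
          + r^2 * ‖u k - zs‖^2) = σ / 2 * ((k : ℝ)^2 * g k) - r * k * (b k - a k)
          + r^2 / (2 * σ) * ‖u k - zs‖^2 := by field_simp
        linarith
      have h6 : 0 ≤ r * k * b k := by
        have := hb k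
        rw [← hbd] at this
        positivity
      rw [hE, h2]
      linarith
    have hb0 : ∀ k, 0 ≤ b k := fun k => by rw [hbd]; exact hb k
    have hε : 0 < s * (r - 1) - D := by linarith
    have hx0 : ∀ k : ℕ, 0 ≤ δ * e k + (s * (r - 1) - D) * ((k : ℝ) + (r + 1) / 2) * g (k+1)
        + r * (r - 1) * b (k+1) := by
      intro k
      have := he0 k; have := hg0 (k+1); have := hb0 (k+1)
      positivity
    have hlow0 : ∀ k, 0 ≤ E k := by
      intro k
      refine le_trans ?_ (hlow k)
      have := hg0 k
      have : 0 < s - σ := by linarith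
      positivity
    have hq := speg_qf E _ (fun _ => 0) 0 hx0 (fun _ => le_rfl) summable_zero hlow0 hstep
    refine ⟨?_, ?_, ?_⟩
    · obtain ⟨l, hl⟩ := hq.2
      exact ⟨l, hl.congr hE⟩
    · refine Summable.of_nonneg_of_le (fun k => ?_) (fun k => ?_) hq.1
      · have := he0 k; have := hg0 (k+1)
        positivity
      · have := hb0 (k+1)
        have : 0 ≤ r * (r - 1) * b (k+1) := by positivity
        linarith
    · obtain ⟨M, hM⟩ := hq.2.choose_spec.bddAbove_range
      refine ⟨M / ((s - σ) / 2), fun k => ?_⟩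
      rw [le_div_iff₀ (by linarith)]
      have : E k ≤ M := hM ⟨k, rfl⟩
      linarith [hlow k]
  obtain ⟨ws, hwsC, hws⟩ := id hsol
  obtain ⟨-, hsum, M, hM⟩ := henergy ws hwsC hws
  have hε : 0 < s * (r - 1) - D := by linarith
  have hsume : Summable e := by
    have h1 : Summable (fun k => δ * e k) := by
      refine Summable.of_nonneg_of_le (fun k => ?_) (fun k => ?_) hsum
      · have := he0 k
        positivity
      · have := hg0 (k+1)
        have : 0 ≤ (s * (r - 1) - D) * ((k : ℝ) + (r + 1) / 2) * g (k+1) := by positivity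
        linarith
    exact (summable_mul_left_iff hδ.ne').1 h1
  have hsumg : Summable (fun k : ℕ => ((k : ℝ) + r) * g (k+1)) := by
    have h1 : Summable (fun k : ℕ => (s * (r - 1) - D) / 2 * (((k : ℝ) + r) * g (k+1))) := by
      refine Summable.of_nonneg_of_le (fun k => ?_) (fun k => ?_) hsum
      · have := hg0 (k+1)
        positivity
      · have := he0 k
        have h3 : 0 ≤ δ * e k := by positivity
        have h4 := hg0 (k+1)
        have h5 : 0 ≤ (s * (r - 1) - D) * ((k : ℝ) / 2 + 1 / 2) * g (k+1) := by positivity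
        linarith
    exact (summable_mul_left_iff (by positivity)).1 h1
  -- X, W
  obtain ⟨X, hX⟩ : ∃ X : ℕ → H, ∀ k : ℕ, X k = ((k : ℝ) + r) • G (k+1) := ⟨_, fun _ => rfl⟩
  obtain ⟨W, hW⟩ : ∃ W : ℕ → H, ∀ k : ℕ, W k = ((k : ℝ) + r) • (F (zh k) + Ct (k+1)) :=
    ⟨_, fun _ => rfl⟩
  have hXn : ∀ k : ℕ, ‖X k‖^2 = ((k : ℝ) + r)^2 * g (k+1) := by
    intro k
    rw [hX, norm_smul, mul_pow, Real.norm_eq_abs, sq_abs, hg]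
  have hXW : ∀ k, ‖W k - X k‖^2 ≤ L^2 * e k := by
    intro k
    have h1 : W k - X k = ((k : ℝ) + r) • (F (zh k) - F (z (k+1))) := by
      rw [hX, hW, hG, ← smul_sub]; congr 1; abel
    rw [h1, norm_smul, mul_pow, Real.norm_eq_abs, sq_abs, he]
    have h2 : ‖F (zh k) - F (z (k+1))‖ ≤ L * ‖z (k+1) - zh k‖ := by
      rw [norm_sub_rev (z (k+1))]; exact hLip _ _
    have h3 : ‖F (zh k) - F (z (k+1))‖^2 ≤ (L * ‖z (k+1) - zh k‖)^2 := by gcongr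
    rw [mul_pow] at h3
    have h4 := mul_le_mul_of_nonneg_left h3 (sq_nonneg ((k : ℝ) + r))
    linarith
  have hsq : ∀ x y : H, ‖x + y‖^2 ≤ 2 * ‖x‖^2 + 2 * ‖y‖^2 := by
    intro x y
    have h1 := norm_add_le x y
    have h2 := norm_nonneg (x + y)
    nlinarith [sq_nonneg (‖x‖ - ‖y‖)]
  have hWn : ∀ k : ℕ, ‖W k‖^2 ≤ 2 * (((k : ℝ) + r)^2 * g (k+1)) + 2 * (L^2 * e k) := by
    intro k
    have h1 := hsq (X k) (W k - X k)
    rw [add_sub_cancel, hXn] at h1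
    linarith [hXW k]
  have hvrec : ∀ k : ℕ, ((k : ℝ) + r) • (z (k+1) - u (k+1))
      = (k : ℝ) • (z k - u k) + ((D / r) • X k + (-s) • W k) := by
    intro k
    have h1 : u (k+1) = u k - (D / r) • G (k+1) := by rw [hu' k]; abel
    rw [smul_sub, hq, h1, hX, hW]
    module
  have hvstep : ∀ k : ℕ, vv (k+1) + vv k * (r / ((k : ℝ) + r)) ≤ vv k
      + 1 / r * ((4 * s^2 + 2 * (D / r)^2) * (((k : ℝ) + r) * g (k+1)) + 4 * s^2 * L^2 * e k) := by
    intro k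
    obtain ⟨Q, hQ⟩ : ∃ Q, Q = (D / r) • X k + (-s) • W k := ⟨_, rfl⟩
    have hk : (0:ℝ) ≤ k := Nat.cast_nonneg k
    have hK := hKr k
    have h1 : ((k : ℝ) + r)^2 * vv (k+1) = ‖(k : ℝ) • (z k - u k) + Q‖^2 := by
      rw [hQ, ← hvrec, norm_smul, mul_pow, Real.norm_eq_abs, sq_abs, hvv]
    rw [norm_add_sq_real, inner_smul_left, norm_smul, mul_pow, Real.norm_eq_abs, sq_abs, ← hvv] at h1
    simp only [RCLike.conj_to_real] at h1
    have h2 : 0 ≤ ‖r • (z k - u k) - Q‖^2 := by positivity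
    rw [norm_sub_sq_real, inner_smul_left, norm_smul, mul_pow, Real.norm_eq_abs, sq_abs, ← hvv] at h2
    simp only [RCLike.conj_to_real] at h2
    have h3 : ((k : ℝ) + r)^2 * vv (k+1) ≤ ((k : ℝ) + r) * (k * vv k + ‖Q‖^2 / r) := by
      have h4 := mul_nonneg (by positivity : 0 ≤ (k : ℝ) / r) h2
      have h5 : (k : ℝ) / r * (r^2 * vv k - 2 * (r * ⟪z k - u k, Q⟫) + ‖Q‖^2)
        = k * r * vv k - 2 * (k * ⟪z k - u k, Q⟫) + k / r * ‖Q‖^2 := by field_simp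
      have h6 : ((k : ℝ) + r) * (k * vv k + ‖Q‖^2 / r)
        = k^2 * vv k + k * r * vv k + k / r * ‖Q‖^2 + ‖Q‖^2 := by field_simp; ring
      linarith
    have h4 : ((k : ℝ) + r) * vv (k+1) ≤ k * vv k + ‖Q‖^2 / r := by
      refine le_of_mul_le_mul_left ?_ hK
      linarith
    have h5 : ‖Q‖^2 ≤ (4 * s^2 + 2 * (D / r)^2) * (((k : ℝ) + r)^2 * g (k+1))
        + 4 * s^2 * L^2 * e k := by
      have h6 := hsq ((D / r) • X k) ((-s) • W k)
      rw [norm_smul, norm_smul, mul_pow, mul_pow, Real.norm_eq_abs, Real.norm_eq_abs, sq_abs, sq_abs,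
        hXn, ← hQ, neg_sq] at h6
      have h7 := mul_le_mul_of_nonneg_left (hWn k) (sq_nonneg s)
      linarith
    have h6 : vv (k+1) ≤ (k * vv k + ‖Q‖^2 / r) / ((k : ℝ) + r) := by
      rw [le_div_iff₀ hK]; linarith
    have h7 : (k * vv k + ‖Q‖^2 / r) / ((k : ℝ) + r) = vv k - vv k * (r / ((k : ℝ) + r))
        + 1 / r * (‖Q‖^2 / ((k : ℝ) + r)) := by
      field_simp; ring
    have h8 : ‖Q‖^2 / ((k : ℝ) + r) ≤ (4 * s^2 + 2 * (D / r)^2) * (((k : ℝ) + r) * g (k+1))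
        + 4 * s^2 * L^2 * e k := by
      rw [div_le_iff₀ hK]
      have h9 : 0 ≤ 4 * s^2 * L^2 * e k * ((k : ℝ) + r - 1) := by
        have := he0 k
        have : 0 ≤ (k : ℝ) + r - 1 := by linarith
        positivity
      linarith
    have h9 := mul_le_mul_of_nonneg_left h8 (by positivity : 0 ≤ 1 / r)
    linarith
  have hY0 : ∀ k : ℕ, 0 ≤ 1 / r * ((4 * s^2 + 2 * (D / r)^2) * (((k : ℝ) + r) * g (k+1))
      + 4 * s^2 * L^2 * e k) := by
    intro k
    have := he0 k; have := hg0 (k+1); have := hKr k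
    positivity
  have hYs : Summable (fun k : ℕ => 1 / r * ((4 * s^2 + 2 * (D / r)^2) * (((k : ℝ) + r) * g (k+1))
      + 4 * s^2 * L^2 * e k)) :=
    ((hsumg.mul_left _).add (hsume.mul_left _)).mul_left _
  obtain ⟨hvs, lv, hlv⟩ := speg_qf vv _ _ 0
    (fun k => by have := hvv0 k; have := hKr k; positivity) hY0 hYs hvv0 hvstep
  have hvs1 : Summable (fun k : ℕ => vv k / ((k : ℝ) + 1)) := by
    refine Summable.of_nonneg_of_le (fun k => by have := hvv0 k; positivity) (fun k => ?_) hvs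
    rw [div_eq_mul_one_div]
    refine mul_le_mul_of_nonneg_left ?_ (hvv0 k)
    rw [div_le_div_iff₀ (by positivity) (hKr k)]
    have : (0:ℝ) ≤ k := Nat.cast_nonneg k
    nlinarith
  have hvlim : Tendsto vv atTop (nhds 0) := by
    have := speg_zero vv lv hvv0 hlv hvs1
    rwa [this] at hlv
  -- k a_k
  have hka : Tendsto (fun k : ℕ => (k : ℝ) * a k) atTop (nhds 0) := by
    have h1 : Tendsto (fun k => Real.sqrt (M * vv k)) atTop (nhds 0) := by
      have := (Real.continuous_sqrt.tendsto (M * 0)).comp (hvlim.const_mul M)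
      rw [mul_zero, Real.sqrt_zero] at this
      exact this
    refine squeeze_zero_norm (fun k => ?_) h1
    apply Real.le_sqrt_of_sq_le
    rw [Real.norm_eq_abs, sq_abs, mul_pow]
    have h2 : (a k)^2 ≤ g k * vv k := by
      rw [ha, hg, hvv, ← mul_pow, ← sq_abs]
      gcongr
      exact abs_real_inner_le_norm _ _
    have h3 := mul_le_mul_of_nonneg_left h2 (sq_nonneg (k : ℝ))
    have h4 := mul_le_mul_of_nonneg_right (hM k) (hvv0 k)
    linarith
  -- T converges
  obtain ⟨T, hT⟩ : ∃ T : ℕ → ℝ, ∀ k : ℕ, T k = r * (k * a k) + s / 2 * ((k : ℝ)^2 * g k) :=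
    ⟨_, fun _ => rfl⟩
  have hva : ∀ k : ℕ, -(a (k+1)) ≤ ((k : ℝ) + r) * g (k+1) + vv (k+1) / (((k+1 : ℕ) : ℝ) + 1) := by
    intro k
    have hk : (0:ℝ) ≤ k := Nat.cast_nonneg k
    have h2 : (a (k+1))^2 ≤ g (k+1) * vv (k+1) := by
      rw [ha, hg, hvv, ← mul_pow, ← sq_abs]
      gcongr
      exact abs_real_inner_le_norm _ _
    have hg1 := hg0 (k+1)
    have hv1 := hvv0 (k+1)
    have hK := hKr k
    have hk2 : (0:ℝ) < k + 2 := by positivity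
    have h3 : ((k+1 : ℕ) : ℝ) + 1 = k + 2 := by push_cast; ring
    rw [h3]
    have hq0 : 0 ≤ vv (k+1) / ((k : ℝ) + 2) := by positivity
    have hp0 : 0 ≤ ((k : ℝ) + r) * g (k+1) := by positivity
    have h4 : g (k+1) * vv (k+1) ≤ 2 * (((k : ℝ) + r) * g (k+1) * (vv (k+1) / ((k : ℝ) + 2))) := by
      have h5 : 2 * (((k : ℝ) + r) * g (k+1) * (vv (k+1) / ((k : ℝ) + 2)))
        = g (k+1) * vv (k+1) * (2 * (k + r) / (k + 2)) := by field_simp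
      rw [h5]
      refine le_mul_of_one_le_right (by positivity) ?_
      rw [one_le_div hk2]
      linarith
    have h6 : (-(a (k+1)))^2 ≤ (((k : ℝ) + r) * g (k+1) + vv (k+1) / ((k : ℝ) + 2))^2 := by
      rw [neg_sq, add_sq]
      linarith [sq_nonneg (((k : ℝ) + r) * g (k+1)), sq_nonneg (vv (k+1) / ((k : ℝ) + 2))]
    exact le_of_sq_le_sq h6 (by positivity)
  have hTstep : ∀ k : ℕ, T (k+1) + 0 ≤ T k + (r * (r - 1) * (((k : ℝ) + r) * g (k+1)
      + vv (k+1) / (((k+1 : ℕ) : ℝ) + 1)) + D * (((k : ℝ) + r) * g (k+1))) := by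
    intro k
    have h1 := hstar k
    have h2 := mul_le_mul_of_nonneg_left (hva k) (by positivity : 0 ≤ r * (r - 1))
    have h3 : 0 ≤ δ * e k := by have := he0 k; positivity
    have h4 : 0 ≤ s / 2 * (((r - 1) * (2 * k + r + 1)) * g (k+1)) := by
      have := hg0 (k+1); positivity
    rw [hT, hT]
    have h5 : s / 2 * (((k+1 : ℕ) : ℝ)^2 * g (k+1)) = s / 2 * (((k : ℝ) + r)^2 * g (k+1))
      - s / 2 * (((r - 1) * (2 * k + r + 1)) * g (k+1)) := by push_cast; ring
    rw [h5]
    have h6 : r * (((k+1 : ℕ) : ℝ) * a (k+1)) = r * ((k : ℝ) + r) * a (k+1)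
      - r * (r - 1) * a (k+1) := by push_cast; ring
    rw [h6]
    linarith
  have hgl : Tendsto (fun k : ℕ => (k : ℝ)^2 * g k) atTop (nhds 0) := by
    obtain ⟨B, hB⟩ := hka.bddBelow_range
    have hvs2 : Summable (fun k : ℕ => vv (k+1) / (((k+1 : ℕ) : ℝ) + 1)) :=
      (summable_nat_add_iff (f := fun k : ℕ => vv k / ((k : ℝ) + 1)) 1).2 hvs1
    obtain ⟨-, l, hl⟩ := speg_qf T (fun _ => 0) _ (r * B) (fun _ => le_rfl) (fun k => by
        have := hg0 (k+1); have := hvv0 (k+1); have := hKr k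
        positivity)
      (((hsumg.add hvs2).mul_left _).add (hsumg.mul_left _)) (fun k => by
        have h1 : B ≤ (k : ℝ) * a k := hB ⟨k, rfl⟩
        have h2 : 0 ≤ s / 2 * ((k : ℝ)^2 * g k) := by have := hg0 k; positivity
        have h3 := mul_le_mul_of_nonneg_left h1 hr0.le
        rw [hT]; linarith) hTstep
    have h1 : Tendsto (fun k : ℕ => (k : ℝ)^2 * g k) atTop (nhds (2 / s * (l - r * 0))) := by
      refine ((hl.sub (hka.const_mul r)).const_mul (2 / s)).congr (fun k => ?_)
      rw [hT]; field_simp; ring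
    have h2 := (tendsto_add_atTop_iff_nat 1).2 h1
    have h3 := speg_zero _ _ (fun k => by have := hg0 (k+1); positivity) h2 (by
      refine Summable.of_nonneg_of_le (fun k => by have := hg0 (k+1); positivity) (fun k => ?_) hsumg
      have hk : (0:ℝ) < (k : ℝ) + 1 := by positivity
      have := hg0 (k+1)
      push_cast
      rw [div_le_iff₀ hk]
      have h4 : 0 ≤ ((k : ℝ) + 1) * (r - 1) * g (k+1) := by positivity
      linarith)
    rwa [h3] at h1
  have hulim : ∀ zs : H, zs ∈ C → (∀ v ∈ C, 0 ≤ ⟪F zs, v - zs⟫) →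
      ∃ l : ℝ, Tendsto (fun k : ℕ => ‖u k - zs‖^2) atTop (nhds l) := by
    intro zs hzs hzs'
    obtain ⟨⟨l, hl⟩, -, -⟩ := henergy zs hzs hzs'
    refine ⟨_, (((hl.sub (hka.const_mul r)).sub (hgl.const_mul (s / 2))).const_mul
      (2 * D / (r^2 * (r - 1)))).congr (fun k => ?_)⟩
    field_simp
    ring
  have hvn : Tendsto (fun k => ‖z k - u k‖) atTop (nhds 0) := by
    have := (Real.continuous_sqrt.tendsto 0).comp hvlim
    rw [Real.sqrt_zero] at this
    refine this.congr (fun k => ?_)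
    simp only [Function.comp, hvv]
    exact Real.sqrt_sq (norm_nonneg _)
  have hkG : Tendsto (fun k : ℕ => (k : ℝ) * ‖G k‖) atTop (nhds 0) := by
    have := (Real.continuous_sqrt.tendsto 0).comp hgl
    rw [Real.sqrt_zero] at this
    refine this.congr (fun k => ?_)
    simp only [Function.comp, hg, ← mul_pow]
    exact Real.sqrt_sq (by positivity)
  have hGn : Tendsto (fun k : ℕ => ‖G k‖) atTop (nhds 0) := by
    refine squeeze_zero' (Eventually.of_forall fun k => norm_nonneg _) ?_ hkG
    filter_upwards [eventually_ge_atTop 1] with k hk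
    have : (1:ℝ) ≤ k := by exact_mod_cast hk
    exact le_mul_of_one_le_left (norm_nonneg _) this
  refine ⟨hvlim.congr hvv, hulim, ?_, ?_, ?_, ?_⟩
  · refine hgl.congr (fun k => ?_)
    rw [hg, hG]
  · intro zs hzs hzs'
    obtain ⟨l, hl⟩ := hulim zs hzs hzs'
    have h1 : Tendsto (fun k => ‖u k - zs‖) atTop (nhds (Real.sqrt l)) := by
      refine ((Real.continuous_sqrt.tendsto l).comp hl).congr (fun k => ?_)
      exact Real.sqrt_sq (norm_nonneg _)
    have h2 : Tendsto (fun k : ℕ => (k : ℝ) * ‖G k‖ * (‖z k - u k‖ + ‖u k - zs‖)) atTop (nhds 0) := by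
      simpa using hkG.mul (hvn.add h1)
    refine squeeze_zero_norm (fun k => ?_) h2
    rw [norm_mul, Real.norm_natCast, mul_assoc, ← hG]
    gcongr
    refine (norm_inner_le_norm _ _).trans ?_
    gcongr
    exact norm_sub_le_norm_sub_add_norm_sub _ _ _
  · have hXl : Tendsto (fun k => ‖X k‖) atTop (nhds 0) := by
      have h1 := (tendsto_add_atTop_iff_nat 1).2 hkG
      have h2 : Tendsto (fun k : ℕ => r * (((k + 1 : ℕ) : ℝ) * ‖G (k+1)‖)) atTop (nhds 0) := by
        simpa using h1.const_mul r
      refine squeeze_zero (fun k => norm_nonneg _) (fun k => ?_) h2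
      rw [hX, norm_smul, Real.norm_eq_abs, abs_of_pos (hKr k), ← mul_assoc]
      gcongr
      push_cast
      have : (0:ℝ) ≤ k := Nat.cast_nonneg k
      nlinarith
    have hWXl : Tendsto (fun k => ‖W k - X k‖) atTop (nhds 0) := by
      have h1 : Tendsto (fun k => Real.sqrt (L^2 * e k)) atTop (nhds 0) := by
        have := (Real.continuous_sqrt.tendsto (L^2 * 0)).comp
          (hsume.tendsto_atTop_zero.const_mul (L^2))
        rw [mul_zero, Real.sqrt_zero] at this
        exact this
      exact squeeze_zero (fun k => norm_nonneg _) (fun k => Real.le_sqrt_of_sq_le (hXW k)) h1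
    have hv1 := (tendsto_add_atTop_iff_nat 1).2 hvn
    have hG1 := (tendsto_add_atTop_iff_nat 1).2 hGn
    have hkd : ∀ k : ℕ, (k : ℝ) • (z (k+1) - z k)
        = (-r) • (z (k+1) - u (k+1)) + D • G (k+1) + (-s) • (X k + (W k - X k)) := by
      intro k
      have h1 := hq k
      have h2 : r • u k = r • u (k+1) + D • G (k+1) := by
        rw [hu' k, smul_add, smul_smul, mul_div_cancel₀ _ hr0.ne']
      have h3 : (k : ℝ) • z (k+1) = ((k : ℝ) + r) • z (k+1) - r • z (k+1) := by module
      rw [smul_sub, h3, h1, h2, add_sub_cancel, hW]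
      module
    have hlim : Tendsto (fun k => r * ‖z (k+1) - u (k+1)‖ + D * ‖G (k+1)‖
        + s * (‖X k‖ + ‖W k - X k‖)) atTop (nhds 0) := by
      simpa using ((hv1.const_mul r).add (hG1.const_mul D)).add ((hXl.add hWXl).const_mul s)
    have h5 : Tendsto (fun k : ℕ => ‖(k : ℝ) • (z (k+1) - z k)‖) atTop (nhds 0) := by
      refine squeeze_zero (fun k => norm_nonneg _) (fun k => ?_) hlim
      rw [hkd]
      refine (norm_add₃_le).trans ?_
      rw [norm_smul, norm_smul, norm_smul, norm_neg, norm_neg, Real.norm_of_nonneg hr0.le,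
        Real.norm_of_nonneg hD0.le, Real.norm_of_nonneg hs0.le]
      gcongr
      exact norm_add_le _ _
    have h6 := h5.pow 2
    rw [zero_pow (by norm_num)] at h6
    refine h6.congr (fun k => ?_)
    rw [norm_smul, mul_pow, Real.norm_natCast]
  · exact speg_weak F C z u G L hLip hmono hCne hCclosed hCconv hsol hzC' hvn hGn
      (fun k v hv => by rw [hG, add_sub_cancel_left]; exact hN k v hv) hulim
end
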